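/- arXiv:math/0409554 — 2 statements merged into one kernel-verified Lean document; each statement's English description precedes it below -/
import Mathlib

section
/- Let n ≥ 1 be an integer and a > −1 a real number. Define h(s) := (d/ds) log ∫_{[s,∞)^n} Δ_n(z)² ∏_{i=1}^n (z_i − s)^a e^{−z_i²} dz (the integral being finite and positive for every real s, and s ↦ log of it smooth). Then h satisfies the Painlevé IV type equation h‴(s) + 6 h′(s)² − 4(s² + 2(a − n)) h′(s) + 4s·h(s) − 8an = 0 for all s ∈ ℝ. -/
open MeasureTheory Filter Real
open scoped BigOperators Topology

noncomputable section

/-- Vandermonde determinant `Δ_n(z) = ∏_{i<j} (z_i - z_j)`. -/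
def vdm {n : ℕ} (z : Fin n → ℝ) : ℝ :=
  ∏ i : Fin n, ∏ j ∈ Finset.Ioi i, (z i - z j)

/-- The matrix-model integral `∫_{[s,∞)^n} Δ_n(z)² ∏ (z_i − s)^a e^{−z_i²} dz`. -/
def matInt4 (n : ℕ) (a : ℝ) (s : ℝ) : ℝ :=
  ∫ z in Set.univ.pi fun _ : Fin n => Set.Ici s,
    vdm z ^ 2 * ∏ i, ((z i - s) ^ a * Real.exp (-(z i ^ 2)))

/-- Its logarithmic derivative `h(s)`. -/
def hlog4 (n : ℕ) (a : ℝ) (s : ℝ) : ℝ :=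
  deriv (fun t => Real.log (matInt4 n a t)) s

/-!
After the translation `z = x + s` the weight becomes, up to the factor `exp (-s²)`, the
semi-classical Laguerre weight `x ^ a exp (-x² - 2 s x)` on the half-line, and Heine's formula
turns the integral into `n! exp (-n s²)` times the product of the squared norms of the first `n`
monic orthogonal polynomials. Hence `h = -2 n s - 2 (α_0 + ⋯ + α_{n-1})`, with `α_k` and `β_k` the
recurrence coefficients. Two systems govern them: differentiating in `s` gives the Toda equations,
while integration by parts in `x` (the Pearson equation of the weight) gives algebraic string
equations. Eliminating the recurrence coefficients between the two leaves the Painlevé equation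
for `h`. The elimination only uses formal properties of the moment functional, so it is carried
out for functionals with values in an arbitrary differential ring.
-/

open Polynomial Set
open scoped Differential Ring

/-! ### Orthogonal polynomials of a moment functional -/

section OrthogonalPolynomials

variable {A : Type*} [CommRing A] (L : A[X] →ₗ[A] A)

/-- The monic orthogonal polynomials of the functional `L`, built by the Stieltjes procedure.
The index is shifted by one: `orthoPoly L (k + 1)` has degree `k`, and `orthoPoly L 0 = 0` plays
the role of `p₋₁`, so that the three-term recurrence holds without exception. -/
def orthoPoly : ℕ → A[X]
  | 0 => 0
  | 1 => 1
  | k + 2 =>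
    let p := orthoPoly (k + 1)
    let q := orthoPoly k
    (X - C ((L (p * p))⁻¹ʳ * L (X * (p * p)))) * p - C ((L (q * q))⁻¹ʳ * L (p * p)) * q

/-- The squared norm `L(p_k²)` of the monic orthogonal polynomial of degree `k`. -/
def normSq (k : ℕ) : A := L (orthoPoly L (k + 1) * orthoPoly L (k + 1))

/-- The diagonal entry `α_k` of the Jacobi matrix of `L`, i.e. of multiplication by `X` in the
basis of monic orthogonal polynomials. -/
def jacobiDiag (k : ℕ) : A :=
  (normSq L k)⁻¹ʳ * L (X * (orthoPoly L (k + 1) * orthoPoly L (k + 1)))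

/-- The off-diagonal entry `β_k = L(p_k²) / L(p_{k-1}²)` of the Jacobi matrix of `L`; here
`β_0 = 0`, because `p₋₁ = 0` and `Ring.inverse 0 = 0`. -/
def jacobiOffDiag (k : ℕ) : A :=
  (L (orthoPoly L k * orthoPoly L k))⁻¹ʳ * normSq L k

/-- The trace `α_0 + ⋯ + α_{k-1}` of the truncated Jacobi matrix of `L`. -/
def jacobiTrace (k : ℕ) : A := ∑ j ∈ Finset.range k, jacobiDiag L j

/-- The functional `L` is quasi-definite if every `L(p_k²)` is invertible, so that the Stieltjes
procedure never divides by a non-unit. -/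
def IsQuasiDefinite : Prop := ∀ k, IsUnit (normSq L k)

local notation "P" => orthoPoly L
local notation "N" => normSq L
local notation "α" => jacobiDiag L
local notation "β" => jacobiOffDiag L
local notation "T" => jacobiTrace L

theorem orthoPoly_zero : P 0 = 0 := by rw [orthoPoly]

theorem orthoPoly_one : P 1 = 1 := by rw [orthoPoly]

theorem orthoPoly_add_two (k : ℕ) :
    P (k + 2) = X * P (k + 1) - C (α k) * P (k + 1) - C (β k) * P k := by
  rw [orthoPoly, jacobiDiag, jacobiOffDiag, normSq]
  ring

theorem X_mul_orthoPoly (k : ℕ) :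
    X * P (k + 1) = P (k + 2) + C (α k) * P (k + 1) + C (β k) * P k := by
  rw [orthoPoly_add_two]
  ring

theorem jacobiOffDiag_zero : β 0 = 0 := by
  simp [jacobiOffDiag, orthoPoly_zero]

theorem jacobiTrace_succ (k : ℕ) : T (k + 1) = T k + α k :=
  Finset.sum_range_succ _ _

theorem map_C_mul (c : A) (p : A[X]) : L (C c * p) = c * L p := by
  rw [← smul_eq_C_mul, map_smul, smul_eq_mul]

theorem degree_orthoPoly_lt (k : ℕ) : (P k).degree < k := by
  induction k using Nat.twoStepInduction with
  | zero => simp [orthoPoly_zero]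
  | one => simpa [orthoPoly_one] using degree_one_le.trans_lt zero_lt_one
  | more k ih₀ ih₁ =>
    rw [degree_lt_iff_coeff_zero] at ih₀ ih₁ ⊢
    intro j hj
    obtain ⟨i, rfl⟩ : ∃ i, j = i + 1 := ⟨j - 1, by omega⟩
    simp [orthoPoly_add_two, ih₁ i (by omega), ih₁ (i + 1) (by omega), ih₀ (i + 1) (by omega)]

theorem coeff_orthoPoly_of_le {j k : ℕ} (h : k ≤ j) : (P k).coeff j = 0 :=
  (degree_lt_iff_coeff_zero _ _).1 (degree_orthoPoly_lt L k) j h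

theorem coeff_orthoPoly_succ_self (k : ℕ) : (P (k + 1)).coeff k = 1 := by
  induction k with
  | zero => simp [orthoPoly_one]
  | succ k ih => simp [orthoPoly_add_two, ih, coeff_orthoPoly_of_le]

theorem orthoPoly_monic (k : ℕ) : (P (k + 1)).Monic :=
  monic_of_degree_le k (Order.le_of_lt_succ (degree_orthoPoly_lt L (k + 1)))
    (coeff_orthoPoly_succ_self L k)

theorem natDegree_orthoPoly [Nontrivial A] (k : ℕ) : (P (k + 1)).natDegree = k :=
  natDegree_eq_of_le_of_coeff_ne_zero
    (natDegree_le_of_degree_le (Order.le_of_lt_succ (degree_orthoPoly_lt L (k + 1))))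
    (by simp [coeff_orthoPoly_succ_self])

theorem coeff_orthoPoly_add_two (k : ℕ) : (P (k + 2)).coeff k = -T (k + 1) := by
  induction k with
  | zero => simp [orthoPoly_add_two, orthoPoly_zero, orthoPoly_one, jacobiTrace]
  | succ k ih =>
    rw [orthoPoly_add_two, jacobiTrace_succ]
    simp only [coeff_sub, coeff_X_mul, coeff_C_mul, ih, coeff_orthoPoly_succ_self,
      coeff_orthoPoly_of_le L le_rfl]
    ring

variable {L}

theorem map_X_mul_orthoPoly_sq (hL : IsQuasiDefinite L) (k : ℕ) :
    L (X * (P (k + 1) * P (k + 1))) = α k * N k := by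
  rw [jacobiDiag, mul_right_comm, Ring.inverse_mul_cancel _ (hL k), one_mul]

theorem jacobiOffDiag_succ_mul_normSq (hL : IsQuasiDefinite L) (k : ℕ) :
    β (k + 1) * N k = N (k + 1) := by
  rw [jacobiOffDiag, mul_right_comm, ← normSq, Ring.inverse_mul_cancel _ (hL k), one_mul]

theorem map_orthoPoly_mul_orthoPoly (hL : IsQuasiDefinite L) {j k : ℕ} (hjk : j < k) :
    L (P k * P j) = 0 := by
  induction k using Nat.strong_induction_on generalizing j with
  | _ k ih =>
  match j, k with
  | 0, k => simp [orthoPoly_zero]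
  | j + 1, k + 2 =>
    have orth {i m : ℕ} (him : i < m) (hm : m < k + 2) : L (P m * P i) = 0 := ih m hm him
    have step : L (P (k + 2) * P (j + 1)) = L (P (k + 1) * (X * P (j + 1))) -
        α k * L (P (k + 1) * P (j + 1)) - β k * L (P k * P (j + 1)) := by
      simp only [← map_C_mul, ← map_sub, orthoPoly_add_two L k]
      congr 1
      ring
    have step' : L (P (k + 1) * (X * P (j + 1))) = L (P (k + 1) * P (j + 2)) +
        α j * L (P (k + 1) * P (j + 1)) + β j * L (P (k + 1) * P j) := by
      simp only [← map_C_mul, ← map_add, X_mul_orthoPoly L j]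
      congr 1
      ring
    rw [step]
    rcases (by omega : j = k ∨ j + 1 = k ∨ j + 1 < k) with rfl | rfl | hlt
    · rw [mul_left_comm, map_X_mul_orthoPoly_sq hL, ← normSq, mul_comm (P j),
        orth (by omega) (by omega)]
      ring
    · rw [step', orth (show j < j + 2 by omega) (by omega),
        orth (show j + 1 < j + 2 by omega) (by omega), ← normSq, ← normSq,
        ← jacobiOffDiag_succ_mul_normSq hL]
      ring
    · rw [step', orth (show j + 2 < k + 1 by omega) (by omega),
        orth (show j + 1 < k + 1 by omega) (by omega), orth (show j < k + 1 by omega) (by omega),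
        orth hlt (by omega)]
      ring

theorem map_orthoPoly_mul_of_degree_lt (hL : IsQuasiDefinite L) {k : ℕ} {q : A[X]}
    (hq : q.degree < k) : L (P (k + 1) * q) = 0 := by
  suffices ∀ m ≤ k, ∀ q : A[X], q.degree < m → L (P (k + 1) * q) = 0 from this k le_rfl q hq
  intro m hm
  induction m with
  | zero => simp +contextual
  | succ m ih =>
    intro q hq
    have remainder : L (P (k + 1) * (q - C (q.coeff m) * P (m + 1))) = 0 := by
      refine ih (by omega) _ ((degree_lt_iff_coeff_zero _ _).2 fun j hj => ?_)
      rcases hj.eq_or_lt with rfl | hj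
      · simp [coeff_orthoPoly_succ_self]
      · simp [coeff_orthoPoly_of_le L hj, (degree_lt_iff_coeff_zero _ _).1 hq j hj]
    rwa [mul_sub, mul_left_comm, map_sub, map_C_mul, map_orthoPoly_mul_orthoPoly hL (by omega),
      mul_zero, sub_zero] at remainder

theorem map_X_mul_orthoPoly_mul_succ (hL : IsQuasiDefinite L) (k : ℕ) :
    L (X * (P (k + 2) * P (k + 1))) = N (k + 1) := by
  rw [mul_left_comm, X_mul_orthoPoly]
  simp only [mul_add, mul_left_comm _ (C _), map_add, map_C_mul,
    map_orthoPoly_mul_orthoPoly hL (show k + 1 < k + 2 by omega),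
    map_orthoPoly_mul_orthoPoly hL (show k < k + 2 by omega), mul_zero, add_zero]
  rfl

theorem jacobiOffDiag_mul_map_orthoPoly_sq (hL : IsQuasiDefinite L) (k : ℕ) :
    β k * (β k * L (P k * P k)) = β k * N k := by
  cases k with
  | zero => simp [jacobiOffDiag_zero]
  | succ k => rw [← normSq, jacobiOffDiag_succ_mul_normSq hL]

theorem map_X_sq_mul_orthoPoly_sq (hL : IsQuasiDefinite L) (k : ℕ) :
    L (X * (X * (P (k + 1) * P (k + 1)))) = N k * (β (k + 1) + β k + α k ^ 2) := by
  have expand : X * (X * (P (k + 1) * P (k + 1))) =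
      P (k + 2) * P (k + 2) + C (α k) * (C (α k) * (P (k + 1) * P (k + 1))) +
        C (β k) * (C (β k) * (P k * P k)) + C 2 * (C (α k) * (P (k + 2) * P (k + 1)) +
        C (β k) * (P (k + 2) * P k) + C (α k) * (C (β k) * (P (k + 1) * P k))) := by
    rw [show X * (X * (P (k + 1) * P (k + 1))) = (X * P (k + 1)) * (X * P (k + 1)) by ring,
      X_mul_orthoPoly, map_ofNat]
    ring
  rw [expand]
  simp only [map_add, map_C_mul, map_orthoPoly_mul_orthoPoly hL (show k < k + 1 by omega),
    map_orthoPoly_mul_orthoPoly hL (show k + 1 < k + 2 by omega),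
    map_orthoPoly_mul_orthoPoly hL (show k < k + 2 by omega),
    jacobiOffDiag_mul_map_orthoPoly_sq hL]
  rw [← normSq, ← normSq, ← jacobiOffDiag_succ_mul_normSq hL]
  ring

theorem map_X_sq_mul_orthoPoly_mul_succ (hL : IsQuasiDefinite L) (k : ℕ) :
    L (X * (X * (P (k + 2) * P (k + 1)))) = N (k + 1) * (α (k + 1) + α k) := by
  have expand : X * (X * (P (k + 2) * P (k + 1))) =
      X * (P (k + 2) * P (k + 2)) + C (α k) * (X * (P (k + 2) * P (k + 1))) +
        C (β k) * (P (k + 3) * P k + C (α (k + 1)) * (P (k + 2) * P k) +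
          C (β (k + 1)) * (P (k + 1) * P k)) := by
    linear_combination
      (X * P (k + 2)) * X_mul_orthoPoly L k + (C (β k) * P k) * X_mul_orthoPoly L (k + 1)
  rw [expand]
  simp only [map_add, map_C_mul, map_orthoPoly_mul_orthoPoly hL (show k < k + 1 by omega),
    map_orthoPoly_mul_orthoPoly hL (show k < k + 2 by omega),
    map_orthoPoly_mul_orthoPoly hL (show k < k + 3 by omega),
    map_X_mul_orthoPoly_mul_succ hL, map_X_mul_orthoPoly_sq hL]
  ring

/-! ### String equations -/

theorem coeff_X_mul_derivative (p : A[X]) (j : ℕ) :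
    (X * derivative p).coeff j = j * p.coeff j := by
  cases j with
  | zero => simp
  | succ j => rw [coeff_X_mul, coeff_derivative]; push_cast; ring

theorem map_orthoPoly_mul_X_mul_derivative (hL : IsQuasiDefinite L) (k : ℕ) :
    L (P (k + 1) * (X * derivative (P (k + 1)))) = k * N k := by
  have lower : L (P (k + 1) * (X * derivative (P (k + 1)) - C (k : A) * P (k + 1))) = 0 := by
    refine map_orthoPoly_mul_of_degree_lt hL ((degree_lt_iff_coeff_zero _ _).2 fun j hj => ?_)
    rw [coeff_sub, coeff_X_mul_derivative, coeff_C_mul]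
    rcases hj.eq_or_lt with rfl | hj
    · ring
    · simp [coeff_orthoPoly_of_le L hj]
  rw [mul_sub, mul_left_comm _ (C _), map_sub, map_C_mul, ← normSq] at lower
  exact sub_eq_zero.1 lower

theorem map_orthoPoly_mul_X_mul_derivative_succ (hL : IsQuasiDefinite L) (k : ℕ) :
    L (P (k + 1) * (X * derivative (P (k + 2)))) = T (k + 1) * N k := by
  have lower : L (P (k + 1) * (X * derivative (P (k + 2)) - C ((k + 1 : ℕ) : A) * P (k + 2) -
      C (T (k + 1)) * P (k + 1))) = 0 := by
    refine map_orthoPoly_mul_of_degree_lt hL ((degree_lt_iff_coeff_zero _ _).2 fun j hj => ?_)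
    rw [coeff_sub, coeff_sub, coeff_X_mul_derivative, coeff_C_mul, coeff_C_mul]
    rcases (by omega : j = k ∨ j = k + 1 ∨ k + 2 ≤ j) with rfl | rfl | hj
    · rw [coeff_orthoPoly_add_two, coeff_orthoPoly_succ_self]
      push_cast
      ring
    · simp [coeff_orthoPoly_of_le]
    · simp [coeff_orthoPoly_of_le L hj, coeff_orthoPoly_of_le L (show k + 1 ≤ j by omega)]
  rw [mul_sub, mul_sub, mul_left_comm _ (C _), mul_left_comm _ (C _), map_sub, map_sub, map_C_mul,
    map_C_mul, mul_comm (P (k + 1)) (P (k + 2)),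
    map_orthoPoly_mul_orthoPoly hL (show k + 1 < k + 2 by omega), ← normSq] at lower
  linear_combination lower

theorem map_orthoPoly_succ_mul_X_mul_derivative (hL : IsQuasiDefinite L) (k : ℕ) :
    L (P (k + 2) * (X * derivative (P (k + 1)))) = 0 :=
  map_orthoPoly_mul_of_degree_lt hL <| (degree_lt_iff_coeff_zero _ _).2 fun j hj => by
    rw [coeff_X_mul_derivative, coeff_orthoPoly_of_le L hj, mul_zero]

variable {a s : A}

variable (L a s) in
/-- The Pearson equation of the weight `x ^ a * exp (-x² - 2 s x)` on `(0, ∞)`: the integral of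
the derivative of `x * p(x)` times the weight vanishes. -/
def SatisfiesPearson : Prop :=
  ∀ p, L (X * derivative p) + (a + 1) * L p = 2 * L (X * (X * p)) + 2 * s * L (X * p)

theorem SatisfiesPearson.two_mul_jacobiOffDiag_add (hs : SatisfiesPearson L a s)
    (hL : IsQuasiDefinite L) (k : ℕ) :
    2 * (β (k + 1) + β k) + 2 * α k * (α k + s) = 2 * k + 1 + a := by
  have pearson := hs (P (k + 1) * P (k + 1))
  have leibniz : X * derivative (P (k + 1) * P (k + 1)) =
      P (k + 1) * (X * derivative (P (k + 1))) + P (k + 1) * (X * derivative (P (k + 1))) := by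
    rw [derivative_mul]
    ring
  rw [leibniz, map_add, map_orthoPoly_mul_X_mul_derivative hL, ← normSq,
    map_X_sq_mul_orthoPoly_sq hL, map_X_mul_orthoPoly_sq hL] at pearson
  apply (hL k).mul_left_cancel
  linear_combination -pearson

theorem SatisfiesPearson.jacobiTrace_succ_eq (hs : SatisfiesPearson L a s)
    (hL : IsQuasiDefinite L) (k : ℕ) :
    T (k + 1) = 2 * β (k + 1) * (α (k + 1) + α k + s) := by
  have pearson := hs (P (k + 2) * P (k + 1))
  have leibniz : X * derivative (P (k + 2) * P (k + 1)) =
      P (k + 1) * (X * derivative (P (k + 2))) + P (k + 2) * (X * derivative (P (k + 1))) := by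
    rw [derivative_mul]
    ring
  rw [leibniz, map_add, map_orthoPoly_mul_X_mul_derivative_succ hL,
    map_orthoPoly_succ_mul_X_mul_derivative hL,
    map_orthoPoly_mul_orthoPoly hL (show k + 1 < k + 2 by omega),
    map_X_sq_mul_orthoPoly_mul_succ hL, map_X_mul_orthoPoly_mul_succ hL,
    ← jacobiOffDiag_succ_mul_normSq hL] at pearson
  apply (hL k).mul_left_cancel
  linear_combination pearson

-- The difference of the two sides does not depend on `k`: it is a first integral of the two
-- preceding recurrences, and it vanishes at `k = -1` because `β 0 = 0`.
theorem SatisfiesPearson.four_mul_jacobiOffDiag (hs : SatisfiesPearson L a s)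
    (hL : IsQuasiDefinite L) (k : ℕ) :
    4 * (α (k + 1) + s) * (α k + s) * β (k + 1) =
      (2 * β (k + 1) - (k + 1)) * (2 * β (k + 1) - (k + 1) - a) := by
  induction k with
  | zero =>
    have diag := hs.two_mul_jacobiOffDiag_add hL 0
    have trace := hs.jacobiTrace_succ_eq hL 0
    have trace_one : T 1 = α 0 := by simp [jacobiTrace]
    rw [jacobiOffDiag_zero] at diag
    push_cast at diag ⊢
    linear_combination 2 * (α 0 + s) * (trace_one - trace) + (1 - 2 * β 1) * diag
  | succ k ih =>
    have diag := hs.two_mul_jacobiOffDiag_add hL (k + 1)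
    have trace := hs.jacobiTrace_succ_eq hL k
    have trace' := hs.jacobiTrace_succ_eq hL (k + 1)
    have trace_succ := jacobiTrace_succ L (k + 1)
    push_cast at diag ⊢
    linear_combination ih + 2 * (α (k + 1) + s) * (trace - trace' + trace_succ) +
      (1 - 2 * (β (k + 2) - β (k + 1))) * diag

/-! ### Toda equations -/

variable [Differential A] {c : A}

variable (L c) in
/-- The functional `L` over a differential ring evolves like integration against
`exp (c t x) dμ(x)`, where `t` is the variable of differentiation. -/
def IsExpDeformation : Prop :=
  ∀ p, (L p)′ = L (Differential.mapCoeffs p) + c * L (X * p)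

theorem degree_mapCoeffs_orthoPoly_lt (k : ℕ) :
    (Differential.mapCoeffs (P (k + 1))).degree < k :=
  (degree_lt_iff_coeff_zero _ _).2 fun j hj => by
    rw [Differential.coeff_mapCoeffs]
    rcases hj.eq_or_lt with rfl | hj
    · rw [coeff_orthoPoly_succ_self, Derivation.map_one_eq_zero]
    · rw [coeff_orthoPoly_of_le L hj, map_zero]

theorem map_orthoPoly_mul_mapCoeffs (hL : IsQuasiDefinite L) {j k : ℕ} (hjk : j ≤ k) :
    L (P (k + 1) * Differential.mapCoeffs (P (j + 1))) = 0 :=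
  map_orthoPoly_mul_of_degree_lt hL <|
    (degree_mapCoeffs_orthoPoly_lt j).trans_le (by exact_mod_cast hjk)

theorem IsExpDeformation.jacobiOffDiag_mul_map_mapCoeffs (hD : IsExpDeformation L c)
    (hL : IsQuasiDefinite L) (k : ℕ) :
    β k * L (P k * Differential.mapCoeffs (P (k + 1))) = -c * β k * N k := by
  cases k with
  | zero => simp [jacobiOffDiag_zero]
  | succ k =>
    have evolve := hD (P (k + 2) * P (k + 1))
    rw [map_orthoPoly_mul_orthoPoly hL (show k + 1 < k + 2 by omega), map_zero,
      Derivation.leibniz, smul_eq_mul, smul_eq_mul, map_add,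
      map_orthoPoly_mul_mapCoeffs hL (Nat.le_succ k), map_X_mul_orthoPoly_mul_succ hL] at evolve
    linear_combination -β (k + 1) * evolve

theorem IsExpDeformation.deriv_normSq (hD : IsExpDeformation L c) (hL : IsQuasiDefinite L)
    (k : ℕ) : (N k)′ = c * α k * N k := by
  rw [normSq, hD, Derivation.leibniz, smul_eq_mul, map_add, map_orthoPoly_mul_mapCoeffs hL le_rfl,
    map_X_mul_orthoPoly_sq hL, normSq]
  ring

theorem IsExpDeformation.deriv_prod_normSq (hD : IsExpDeformation L c) (hL : IsQuasiDefinite L)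
    (n : ℕ) : (∏ k ∈ Finset.range n, N k)′ = c * T n * ∏ k ∈ Finset.range n, N k := by
  induction n with
  | zero => simp [jacobiTrace]
  | succ n ih =>
    rw [Finset.prod_range_succ, Derivation.leibniz, ih, hD.deriv_normSq hL, jacobiTrace_succ,
      smul_eq_mul, smul_eq_mul]
    ring

theorem IsExpDeformation.deriv_jacobiOffDiag (hD : IsExpDeformation L c)
    (hL : IsQuasiDefinite L) (k : ℕ) :
    (β (k + 1))′ = c * β (k + 1) * (α (k + 1) - α k) := by
  have ratio := congrArg Differential.deriv (jacobiOffDiag_succ_mul_normSq hL k)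
  rw [Derivation.leibniz, smul_eq_mul, smul_eq_mul, hD.deriv_normSq hL, hD.deriv_normSq hL,
    ← jacobiOffDiag_succ_mul_normSq hL] at ratio
  apply (hL k).mul_left_cancel
  linear_combination ratio

theorem IsExpDeformation.deriv_jacobiDiag (hD : IsExpDeformation L c)
    (hL : IsQuasiDefinite L) (k : ℕ) : (α k)′ = c * (β (k + 1) - β k) := by
  have ratio := congrArg Differential.deriv (map_X_mul_orthoPoly_sq hL k)
  have leibniz : Differential.mapCoeffs (X * (P (k + 1) * P (k + 1))) =
      C 2 * (P (k + 2) * Differential.mapCoeffs (P (k + 1)) +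
        C (α k) * (P (k + 1) * Differential.mapCoeffs (P (k + 1))) +
        C (β k) * (P k * Differential.mapCoeffs (P (k + 1)))) := by
    rw [Derivation.leibniz, Derivation.leibniz, Differential.mapCoeffs_X, map_ofNat]
    simp only [smul_eq_mul]
    linear_combination 2 * Differential.mapCoeffs (P (k + 1)) * X_mul_orthoPoly L k
  rw [hD, leibniz] at ratio
  simp only [map_add, map_C_mul, map_orthoPoly_mul_mapCoeffs hL (Nat.le_succ k),
    map_orthoPoly_mul_mapCoeffs hL le_rfl, hD.jacobiOffDiag_mul_map_mapCoeffs hL,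
    map_X_sq_mul_orthoPoly_sq hL, Derivation.leibniz, smul_eq_mul, hD.deriv_normSq hL] at ratio
  apply (hL k).mul_left_cancel
  linear_combination -ratio

theorem IsExpDeformation.deriv_jacobiTrace (hD : IsExpDeformation L c)
    (hL : IsQuasiDefinite L) (k : ℕ) : (T k)′ = c * β k := by
  induction k with
  | zero => simp [jacobiTrace, jacobiOffDiag_zero]
  | succ k ih =>
    rw [jacobiTrace_succ, map_add, ih, hD.deriv_jacobiDiag hL]
    ring

/-! ### The Painlevé equation -/

theorem deriv_ofNat_eq_zero (m : ℕ) [m.AtLeastTwo] : (ofNat(m) : A)′ = 0 := by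
  rw [← Nat.cast_ofNat]
  exact Differential.deriv.map_natCast m

theorem painleveIV_of_isExpDeformation_of_satisfiesPearson (hD : IsExpDeformation L (-2))
    (hL : IsQuasiDefinite L) (hs : SatisfiesPearson L a s) (deriv_s : s′ = 1) (k : ℕ) {h : A}
    (hh : h = -2 * (k + 1 : ℕ) * s - 2 * T (k + 1)) :
    h′′′ + 6 * h′ ^ 2 - 4 * (s ^ 2 + 2 * (a - (k + 1 : ℕ))) * h′ + 4 * s * h -
      8 * a * (k + 1 : ℕ) = 0 := by
  have deriv_k : ((k + 1 : ℕ) : A)′ = 0 := Differential.deriv.map_natCast (k + 1)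
  have deriv_h : h′ = 4 * β (k + 1) - 2 * (k + 1 : ℕ) := by
    rw [hh]
    simp only [map_sub, Derivation.leibniz, smul_eq_mul, map_neg, deriv_ofNat_eq_zero, deriv_k,
      deriv_s, hD.deriv_jacobiTrace hL]
    ring
  have deriv2_h : h′′ = -8 * (β (k + 1) * (α (k + 1) - α k)) := by
    rw [deriv_h]
    simp only [map_sub, Derivation.leibniz, smul_eq_mul, deriv_ofNat_eq_zero, deriv_k,
      hD.deriv_jacobiOffDiag hL]
    ring
  have deriv3_h : h′′′ = 16 * β (k + 1) *
      (β (k + 2) - 2 * β (k + 1) + β k + (α (k + 1) - α k) ^ 2) := by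
    rw [deriv2_h]
    simp only [map_sub, Derivation.leibniz, smul_eq_mul, map_neg, deriv_ofNat_eq_zero,
      hD.deriv_jacobiDiag hL, hD.deriv_jacobiOffDiag hL]
    ring
  have trace := hs.jacobiTrace_succ_eq hL k
  have diag := hs.two_mul_jacobiOffDiag_add hL k
  have diag' := hs.two_mul_jacobiOffDiag_add hL (k + 1)
  have offDiag := hs.four_mul_jacobiOffDiag hL k
  rw [deriv3_h, deriv_h, hh, trace]
  push_cast at diag' ⊢
  linear_combination (-8) * offDiag + 8 * β (k + 1) * (diag + diag')

end OrthogonalPolynomials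

/-! ### The differential ring of smooth functions -/

section SmoothFunctions

/-- The algebra of smooth real functions of one real variable, over which the moment functional of
a varying measure is defined. -/
def smoothFunctions : Subalgebra ℝ (ℝ → ℝ) where
  carrier := {f | ContDiff ℝ (⊤ : ℕ∞) f}
  mul_mem' hf hg := ContDiff.mul (mem_ofPred.1 hf) (mem_ofPred.1 hg)
  add_mem' hf hg := ContDiff.add (mem_ofPred.1 hf) (mem_ofPred.1 hg)
  algebraMap_mem' c := mem_ofPred.2 (contDiff_const (c := c))

theorem mem_smoothFunctions {f : ℝ → ℝ} :
    f ∈ smoothFunctions ↔ ContDiff ℝ (⊤ : ℕ∞) f := Iff.rfl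

/-- Evaluation of smooth functions at `s`. -/
def evalAt (s : ℝ) : smoothFunctions →+* ℝ :=
  (Pi.evalRingHom (fun _ => ℝ) s).comp smoothFunctions.val.toRingHom

/-- The identity function as a smooth function; this is the variable of differentiation. -/
def smoothId : smoothFunctions := ⟨id, mem_smoothFunctions.2 contDiff_id⟩

namespace smoothFunctions

theorem contDiff (f : smoothFunctions) : ContDiff ℝ (⊤ : ℕ∞) (f : ℝ → ℝ) :=
  mem_smoothFunctions.1 f.2

theorem differentiable (f : smoothFunctions) : Differentiable ℝ (f : ℝ → ℝ) :=
  (contDiff f).differentiable (by simp)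

/-- Smooth functions form a differential ring under the usual derivative. -/
instance : Differential smoothFunctions where
  deriv := Derivation.mk'
    (AddMonoidHom.toIntLinearMap
      { toFun f :=
          ⟨_root_.deriv f, mem_smoothFunctions.2 (contDiff_infty_iff_deriv.1 (contDiff f)).2⟩
        map_zero' := Subtype.ext (deriv_const' 0)
        map_add' f g :=
          Subtype.ext <| funext fun x => deriv_add (differentiable f x) (differentiable g x) })
    fun f g => Subtype.ext <| funext fun x => by
      simpa [mul_comm, add_comm] using deriv_mul (differentiable f x) (differentiable g x)

theorem evalAt_apply (s : ℝ) (f : smoothFunctions) : evalAt s f = (f : ℝ → ℝ) s := rfl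

theorem evalAt_algebraMap (s c : ℝ) : evalAt s (algebraMap ℝ smoothFunctions c) = c := rfl

theorem evalAt_smoothId (s : ℝ) : evalAt s smoothId = s := rfl

theorem coe_deriv (f : smoothFunctions) : (f′ : smoothFunctions) = deriv (f : ℝ → ℝ) := rfl

theorem ext_evalAt {f g : smoothFunctions} (h : ∀ s, evalAt s f = evalAt s g) : f = g :=
  Subtype.ext (funext h)

theorem isUnit_of_evalAt_ne_zero {f : smoothFunctions} (h : ∀ s, evalAt s f ≠ 0) : IsUnit f :=
  .of_mul_eq_one ⟨fun s => (evalAt s f)⁻¹, mem_smoothFunctions.2 ((contDiff f).inv h)⟩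
    (ext_evalAt fun s => mul_inv_cancel₀ (h s))

theorem deriv_smoothId : smoothId′ = 1 :=
  ext_evalAt fun s => deriv_id s

end smoothFunctions

end SmoothFunctions

/-! ### Moments of exponentially tilted measures -/

section ExpMoments

open ProbabilityTheory

variable {μ : Measure ℝ}

theorem integrable_eval_mul_exp (hμ : integrableExpSet id μ = univ) (p : ℝ[X]) (t : ℝ) :
    Integrable (fun x => p.eval x * exp (t * x)) μ := by
  induction p using Polynomial.induction_on' with
  | add p q hp hq =>
    simp only [eval_add, add_mul]
    exact hp.add hq
  | monomial k b =>
    have ht : t ∈ interior (integrableExpSet id μ) := by simp [hμ]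
    simp only [eval_monomial, mul_assoc]
    exact (integrable_pow_mul_exp_of_mem_interior_integrableExpSet ht k).const_mul b

theorem integral_eval_sq_mul_exp_pos (hμ : integrableExpSet id μ = univ)
    (hsupp : ∀ F : Finset ℝ, ¬ ∀ᵐ x ∂μ, x ∈ F) {p : ℝ[X]} (hp : p ≠ 0) (t : ℝ) :
    0 < ∫ x, (p * p).eval x * exp (t * x) ∂μ := by
  have nonneg : 0 ≤ fun x => (p * p).eval x * exp (t * x) := fun x => by
    simp only [eval_mul]
    exact mul_nonneg (mul_self_nonneg _) (exp_nonneg _)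
  refine (integral_nonneg nonneg).lt_of_ne' fun h => hsupp p.roots.toFinset ?_
  rw [integral_eq_zero_iff_of_nonneg nonneg (integrable_eval_mul_exp hμ _ t)] at h
  filter_upwards [h] with x hx
  simpa [hp, (exp_pos _).ne'] using hx

variable (μ) in
/-- The moment `∫ x ^ k exp (c s x) dμ(x)` of the tilted measure, as a function of `s`. -/
def expMoment (c : ℝ) (k : ℕ) (s : ℝ) : ℝ := ∫ x, x ^ k * exp (c * s * x) ∂μ

theorem contDiff_expMoment (hμ : integrableExpSet id μ = univ) (c : ℝ) (k : ℕ) :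
    ContDiff ℝ (⊤ : ℕ∞) (expMoment μ c k) := by
  have eq_iteratedDeriv : expMoment μ c k = fun s => iteratedDeriv k (mgf id μ) (c * s) :=
    funext fun s => (iteratedDeriv_mgf (X := id) (by simp [hμ]) k).symm
  have analytic : AnalyticOnNhd ℝ (iteratedDeriv k (mgf id μ)) univ := by
    simpa [hμ] using analyticOnNhd_iteratedDeriv_mgf (X := id) (μ := μ) k
  rw [eq_iteratedDeriv]
  exact (contDiffOn_univ.1 <| analytic.contDiffOn uniqueDiffOn_univ).comp
    (contDiff_const.mul contDiff_id)

theorem deriv_expMoment (hμ : integrableExpSet id μ = univ) (c : ℝ) (k : ℕ) (s : ℝ) :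
    deriv (expMoment μ c k) s = c * expMoment μ c (k + 1) s := by
  have outer := hasDerivAt_integral_pow_mul_exp_real (X := id) (μ := μ) (t := c * s)
    (by simp [hμ]) k
  have inner : HasDerivAt (fun s => c * s) c s := by simpa using (hasDerivAt_id s).const_mul c
  rw [mul_comm]
  exact (outer.comp s inner).deriv

/-- The moments of the tilted measure as elements of the ring of smooth functions. -/
def smoothExpMoment (hμ : integrableExpSet id μ = univ) (c : ℝ) (k : ℕ) : smoothFunctions :=
  ⟨expMoment μ c k, mem_smoothFunctions.2 (contDiff_expMoment hμ c k)⟩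

/-- The functional `p ↦ ∫ p(x) exp (c s x) dμ(x)` with values in smooth functions of `s`. -/
def expMomentFunctional (hμ : integrableExpSet id μ = univ) (c : ℝ) :
    smoothFunctions[X] →ₗ[smoothFunctions] smoothFunctions :=
  Polynomial.lsum fun k =>
    LinearMap.toSpanSingleton _ _ (smoothExpMoment hμ c k)

variable (hμ : integrableExpSet id μ = univ) (c : ℝ)

theorem expMomentFunctional_monomial (k : ℕ) (b : smoothFunctions) :
    expMomentFunctional hμ c (monomial k b) = b * smoothExpMoment hμ c k := by
  rw [expMomentFunctional, lsum_apply, sum_monomial_index _ _ (by simp),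
    LinearMap.toSpanSingleton_apply, smul_eq_mul]

theorem evalAt_expMomentFunctional (s : ℝ) (p : smoothFunctions[X]) :
    evalAt s (expMomentFunctional hμ c p) =
      ∫ x, (p.map (evalAt s)).eval x * exp (c * s * x) ∂μ := by
  induction p using Polynomial.induction_on' with
  | add p q hp hq =>
    simp only [map_add, hp, hq, Polynomial.map_add, eval_add, add_mul]
    rw [integral_add (integrable_eval_mul_exp hμ _ _) (integrable_eval_mul_exp hμ _ _)]
  | monomial k b =>
    simp only [expMomentFunctional_monomial, map_mul, map_monomial, eval_monomial, mul_assoc]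
    rw [integral_const_mul]
    simp only [smoothExpMoment, smoothFunctions.evalAt_apply, expMoment, mul_assoc]

theorem isExpDeformation_expMomentFunctional :
    IsExpDeformation (expMomentFunctional hμ c) (algebraMap ℝ smoothFunctions c) := by
  intro p
  induction p using Polynomial.induction_on' with
  | add p q hp hq =>
    simp only [mul_add, map_add, hp, hq]
    ring
  | monomial k b =>
    have deriv_moment : (smoothExpMoment hμ c k)′ =
        algebraMap ℝ smoothFunctions c * smoothExpMoment hμ c (k + 1) :=
      smoothFunctions.ext_evalAt (deriv_expMoment hμ c k)
    rw [X_mul_monomial, Differential.mapCoeffs_monomial]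
    simp only [expMomentFunctional_monomial, Derivation.leibniz, smul_eq_mul, deriv_moment]
    ring

variable {hμ c}

theorem evalAt_expMomentFunctional_sq_pos (hsupp : ∀ F : Finset ℝ, ¬ ∀ᵐ x ∂μ, x ∈ F)
    {p : smoothFunctions[X]} (hp : p.Monic) (s : ℝ) :
    0 < evalAt s (expMomentFunctional hμ c (p * p)) := by
  rw [evalAt_expMomentFunctional, Polynomial.map_mul]
  exact integral_eval_sq_mul_exp_pos hμ hsupp (hp.map _).ne_zero _

theorem evalAt_normSq_expMomentFunctional_pos (hsupp : ∀ F : Finset ℝ, ¬ ∀ᵐ x ∂μ, x ∈ F)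
    (k : ℕ) (s : ℝ) : 0 < evalAt s (normSq (expMomentFunctional hμ c) k) :=
  evalAt_expMomentFunctional_sq_pos hsupp (orthoPoly_monic _ k) s

theorem isQuasiDefinite_expMomentFunctional (hsupp : ∀ F : Finset ℝ, ¬ ∀ᵐ x ∂μ, x ∈ F) :
    IsQuasiDefinite (expMomentFunctional hμ c) := fun k =>
  smoothFunctions.isUnit_of_evalAt_ne_zero fun s =>
    (evalAt_normSq_expMomentFunctional_pos hsupp k s).ne'

end ExpMoments

/-! ### Heine's formula -/

section Heine

open Equiv.Perm

variable {ι : Type*} [Fintype ι] [DecidableEq ι]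

theorem sum_sign_mul_sign_mul_prod {R : Type*} [CommRing R] (G : Matrix ι ι R) :
    ∑ σ : Equiv.Perm ι, ∑ τ : Equiv.Perm ι,
        ((sign σ : ℤ) : R) * ((sign τ : ℤ) : R) * ∏ i, G (σ i) (τ i) =
      (Fintype.card ι).factorial * G.det := by
  have inner (σ : Equiv.Perm ι) : ∑ τ : Equiv.Perm ι,
      ((sign σ : ℤ) : R) * ((sign τ : ℤ) : R) * ∏ i, G (σ i) (τ i) = G.det :=
    calc ∑ τ : Equiv.Perm ι, ((sign σ : ℤ) : R) * ((sign τ : ℤ) : R) * ∏ i, G (σ i) (τ i)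
      _ = ((sign σ : ℤ) : R) * (G.submatrix σ id).transpose.det := by
        simp [Matrix.det_apply', Finset.mul_sum, mul_assoc]
      _ = ((sign σ : ℤ) : R) * (((sign σ : ℤ) : R) * G.det) := by
        rw [Matrix.det_transpose, Matrix.det_permute]
      _ = G.det := by
        rw [← mul_assoc, ← Int.cast_mul, Int.units_coe_mul_self, Int.cast_one, one_mul]
  simp [inner, Fintype.card_perm]

theorem det_mul_det_eq_sum {Ω R : Type*} [CommRing R] (f g : ι → Ω → R) (z : ι → Ω) :
    (Matrix.of fun i j => f i (z j)).det * (Matrix.of fun i j => g i (z j)).det =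
      ∑ σ : Equiv.Perm ι, ∑ τ : Equiv.Perm ι,
        ((sign σ : ℤ) : R) * ((sign τ : ℤ) : R) * ∏ i, (f (σ i) (z i) * g (τ i) (z i)) := by
  simp only [Matrix.det_apply', Finset.sum_mul_sum, Matrix.of_apply, Finset.prod_mul_distrib]
  exact Finset.sum_congr rfl fun σ _ => Finset.sum_congr rfl fun τ _ => by ring

variable {𝕜 Ω : Type*} [RCLike 𝕜] [MeasurableSpace Ω] {ν : Measure Ω} [SigmaFinite ν]
  {f g : ι → Ω → 𝕜}

theorem integrable_prod_perm_mul_perm (hfg : ∀ i j, Integrable (fun x => f i x * g j x) ν)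
    (σ τ : Equiv.Perm ι) :
    Integrable (fun z : ι → Ω =>
      ((sign σ : ℤ) : 𝕜) * ((sign τ : ℤ) : 𝕜) * ∏ i, (f (σ i) (z i) * g (τ i) (z i)))
      (Measure.pi fun _ => ν) :=
  (Integrable.fintype_prod (f := fun i x => f (σ i) x * g (τ i) x)
    fun i => hfg (σ i) (τ i)).const_mul _

theorem integrable_det_mul_det (hfg : ∀ i j, Integrable (fun x => f i x * g j x) ν) :
    Integrable (fun z : ι → Ω =>
      (Matrix.of fun i j => f i (z j)).det * (Matrix.of fun i j => g i (z j)).det)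
      (Measure.pi fun _ => ν) := by
  simp only [det_mul_det_eq_sum]
  exact integrable_finsetSum _ fun σ _ => integrable_finsetSum _ fun τ _ =>
    integrable_prod_perm_mul_perm hfg σ τ

theorem integral_det_mul_det (hfg : ∀ i j, Integrable (fun x => f i x * g j x) ν) :
    ∫ z : ι → Ω, (Matrix.of fun i j => f i (z j)).det * (Matrix.of fun i j => g i (z j)).det
        ∂(Measure.pi fun _ => ν) =
      (Fintype.card ι).factorial * (Matrix.of fun i j => ∫ x, f i x * g j x ∂ν).det := by
  simp only [det_mul_det_eq_sum]
  rw [integral_finsetSum _ fun σ _ => integrable_finsetSum _ fun τ _ =>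
    integrable_prod_perm_mul_perm hfg σ τ, ← sum_sign_mul_sign_mul_prod]
  refine Finset.sum_congr rfl fun σ _ => ?_
  rw [integral_finsetSum _ fun τ _ => integrable_prod_perm_mul_perm hfg σ τ]
  refine Finset.sum_congr rfl fun τ _ => ?_
  rw [integral_const_mul, integral_fintype_prod_eq_prod (f := fun i x => f (σ i) x * g (τ i) x)]
  rfl

theorem vdm_sq {n : ℕ} (z : Fin n → ℝ) : vdm z ^ 2 = (Matrix.vandermonde z).det ^ 2 := by
  simp only [vdm, Matrix.det_vandermonde, ← Finset.prod_pow]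
  exact Finset.prod_congr rfl fun i _ => Finset.prod_congr rfl fun j _ => by ring

variable {n : ℕ} {p : ℕ → ℝ[X]}

theorem vdm_sq_mul_prod (hmonic : ∀ k, (p k).Monic) (hdeg : ∀ k, (p k).natDegree = k)
    (W : ℝ → ℝ) (z : Fin n → ℝ) :
    vdm z ^ 2 * ∏ i, W (z i) = (Matrix.of fun i j : Fin n => W (z j) * (p i).eval (z j)).det *
      (Matrix.of fun i j : Fin n => (p i).eval (z j)).det := by
  have det_eval : (Matrix.of fun i j : Fin n => (p i).eval (z j)).det =
      (Matrix.vandermonde z).det := by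
    rw [Matrix.det_eval_matrixOfPolynomials_eq_det_vandermonde z (fun i => p i)
      (fun i => hdeg i) (fun i => hmonic i), ← Matrix.det_transpose]
    rfl
  have pull_out := Matrix.det_mul_row (fun j => W (z j))
    (Matrix.of fun i j : Fin n => (p i).eval (z j))
  simp only [Matrix.of_apply] at pull_out
  rw [pull_out, det_eval, vdm_sq]
  ring

variable {ν : Measure ℝ} [SigmaFinite ν] {W : ℝ → ℝ}

theorem integrable_vdm_sq_mul_prod (hmonic : ∀ k, (p k).Monic) (hdeg : ∀ k, (p k).natDegree = k)
    (hint : ∀ i j, Integrable (fun x => W x * (p i * p j).eval x) ν) :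
    Integrable (fun z : Fin n → ℝ => vdm z ^ 2 * ∏ i, W (z i)) (Measure.pi fun _ => ν) := by
  simp only [vdm_sq_mul_prod hmonic hdeg]
  exact integrable_det_mul_det (f := fun (i : Fin n) x => W x * (p i).eval x)
    (g := fun (i : Fin n) x => (p i).eval x)
    fun i j => by simpa only [eval_mul, mul_assoc] using hint i j

theorem integral_vdm_sq_mul_prod (hmonic : ∀ k, (p k).Monic) (hdeg : ∀ k, (p k).natDegree = k)
    (hint : ∀ i j, Integrable (fun x => W x * (p i * p j).eval x) ν)
    (horth : ∀ i j, i < j → ∫ x, W x * (p j * p i).eval x ∂ν = 0) :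
    ∫ z : Fin n → ℝ, vdm z ^ 2 * ∏ i, W (z i) ∂(Measure.pi fun _ => ν) =
      n.factorial * ∏ k ∈ Finset.range n, ∫ x, W x * (p k * p k).eval x ∂ν := by
  have gram : (Matrix.of fun i j : Fin n => ∫ x, W x * (p i).eval x * (p j).eval x ∂ν) =
      Matrix.diagonal fun k : Fin n => ∫ x, W x * (p k * p k).eval x ∂ν := by
    ext i j
    simp only [Matrix.of_apply, mul_assoc, ← eval_mul]
    rcases lt_trichotomy i j with hij | rfl | hij
    · rw [Matrix.diagonal_apply_ne _ hij.ne, mul_comm (p i), horth i j hij]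
    · rw [Matrix.diagonal_apply_eq]
    · rw [Matrix.diagonal_apply_ne' _ hij.ne, horth j i hij]
  simp only [vdm_sq_mul_prod hmonic hdeg]
  rw [integral_det_mul_det (f := fun (i : Fin n) x => W x * (p i).eval x)
    (g := fun (i : Fin n) x => (p i).eval x)
    (fun i j => by simpa only [eval_mul, mul_assoc] using hint i j), gram, Matrix.det_diagonal,
    Fintype.card_fin, Finset.prod_range]

end Heine

/-! ### The semi-classical Laguerre weight -/

section SemiclassicalLaguerre

open ProbabilityTheory

/-- The semi-classical Laguerre measure `x ^ a exp (-x²) dx` on the half-line `(0, ∞)`. -/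
def semiclassicalLaguerre (a : ℝ) : Measure ℝ :=
  (volume.restrict (Ioi 0)).withDensity fun x => ENNReal.ofReal (x ^ a * exp (-x ^ 2))

variable {a : ℝ}

theorem measurable_ofReal_rpow_mul_exp_neg_sq :
    Measurable fun x : ℝ => ENNReal.ofReal (x ^ a * exp (-x ^ 2)) := by
  fun_prop

theorem toReal_ofReal_rpow_mul_exp_smul_ae_eq (f : ℝ → ℝ) :
    (fun x => (ENNReal.ofReal (x ^ a * exp (-x ^ 2))).toReal • f x)
      =ᵐ[volume.restrict (Ioi 0)] fun x => x ^ a * exp (-x ^ 2) * f x := by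
  filter_upwards [ae_restrict_mem measurableSet_Ioi] with x (hx : 0 < x)
  rw [ENNReal.toReal_ofReal (by positivity), smul_eq_mul]

theorem integrable_semiclassicalLaguerre_iff {f : ℝ → ℝ} :
    Integrable f (semiclassicalLaguerre a) ↔
      IntegrableOn (fun x => x ^ a * exp (-x ^ 2) * f x) (Ioi 0) := by
  rw [semiclassicalLaguerre, integrable_withDensity_iff_integrable_smul'
    measurable_ofReal_rpow_mul_exp_neg_sq (by simp), IntegrableOn,
    integrable_congr (toReal_ofReal_rpow_mul_exp_smul_ae_eq f)]

theorem integral_semiclassicalLaguerre (f : ℝ → ℝ) :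
    ∫ x, f x ∂semiclassicalLaguerre a = ∫ x in Ioi 0, x ^ a * exp (-x ^ 2) * f x := by
  rw [semiclassicalLaguerre, integral_withDensity_eq_integral_toReal_smul
    measurable_ofReal_rpow_mul_exp_neg_sq (by simp),
    integral_congr_ae (toReal_ofReal_rpow_mul_exp_smul_ae_eq f)]

theorem not_ae_mem_finset_semiclassicalLaguerre (F : Finset ℝ) :
    ¬ ∀ᵐ x ∂semiclassicalLaguerre a, x ∈ F := by
  intro h
  rw [semiclassicalLaguerre, ae_withDensity_iff measurable_ofReal_rpow_mul_exp_neg_sq] at h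
  have ae_false : ∀ᵐ _ ∂(volume.restrict (Ioi (0 : ℝ))), False := by
    filter_upwards [h, ae_restrict_mem measurableSet_Ioi,
      F.countable_toSet.ae_notMem _] with x hmem (hx : 0 < x) hnotMem
    exact hnotMem (hmem (ENNReal.ofReal_pos.2 (by positivity)).ne')
  simp [eventually_false_iff_eq_bot, ae_eq_bot, -ae_restrict_eq] at ae_false

theorem integrableExpSet_semiclassicalLaguerre (ha : -1 < a) :
    integrableExpSet id (semiclassicalLaguerre a) = univ := by
  refine eq_univ_of_forall fun t => integrable_semiclassicalLaguerre_iff.2 ?_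
  have dominating := (integrableOn_rpow_mul_exp_neg_mul_sq (b := 1 / 2) (by norm_num) ha).const_mul
    (exp (t ^ 2 / 2))
  refine dominating.mono' (by fun_prop) ?_
  filter_upwards [ae_restrict_mem measurableSet_Ioi] with x (hx : 0 < x)
  have complete_square : exp (-x ^ 2) * exp (t * x) ≤ exp (t ^ 2 / 2) * exp (-(1 / 2) * x ^ 2) := by
    rw [← exp_add, ← exp_add, exp_le_exp]
    linarith [sq_nonneg (x - t)]
  calc ‖x ^ a * exp (-x ^ 2) * exp (t * x)‖
    _ = x ^ a * (exp (-x ^ 2) * exp (t * x)) := by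
      rw [norm_of_nonneg (by positivity), mul_assoc]
    _ ≤ x ^ a * (exp (t ^ 2 / 2) * exp (-(1 / 2) * x ^ 2)) := by gcongr
    _ = exp (t ^ 2 / 2) * (x ^ a * exp (-(1 / 2) * x ^ 2)) := by ring

theorem hasDerivAt_rpow_mul_exp_neg_sq_mul_eval (a t : ℝ) (p : ℝ[X]) {x : ℝ} (hx : 0 < x) :
    HasDerivAt (fun x => x ^ a * exp (-x ^ 2) * ((X * p).eval x * exp (t * x)))
      (x ^ a * exp (-x ^ 2) *
        ((X * derivative p + C (a + 1) * p + C (-2) * (X * (X * p)) + C t * (X * p)).eval x *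
          exp (t * x))) x := by
  have gaussian : HasDerivAt (fun x : ℝ => exp (-x ^ 2)) (exp (-x ^ 2) * -(2 * x)) x := by
    simpa using (hasDerivAt_pow 2 x).neg.exp
  have tilt : HasDerivAt (fun x : ℝ => exp (t * x)) (exp (t * x) * t) x := by
    simpa using ((hasDerivAt_id x).const_mul t).exp
  refine (((hasDerivAt_rpow_const (p := a) (.inl hx.ne')).fun_mul gaussian).fun_mul
    (((X * p).hasDerivAt x).fun_mul tilt)).congr_deriv ?_
  rw [rpow_sub_one hx.ne']
  simp only [derivative_mul, derivative_X, eval_add, eval_mul, eval_X, eval_C, eval_one]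
  field_simp
  ring

theorem continuousWithinAt_rpow_mul_exp_neg_sq_mul_eval (ha : -1 < a) (t : ℝ) (p : ℝ[X]) :
    ContinuousWithinAt (fun x => x ^ a * exp (-x ^ 2) * ((X * p).eval x * exp (t * x)))
      (Ici 0) 0 := by
  have continuous_extension :
      Continuous fun x : ℝ => x ^ (a + 1) * (exp (-x ^ 2) * (p.eval x * exp (t * x))) :=
    (continuous_rpow_const (by linarith)).mul (by fun_prop)
  have eq_extension (x : ℝ) (hx : x ∈ Ici 0) :
      x ^ a * exp (-x ^ 2) * ((X * p).eval x * exp (t * x)) =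
        x ^ (a + 1) * (exp (-x ^ 2) * (p.eval x * exp (t * x))) := by
    rw [rpow_add_one' hx (by linarith), eval_mul, eval_X]
    ring
  exact continuous_extension.continuousWithinAt.congr eq_extension (eq_extension 0 self_mem_Ici)

theorem integral_pearson_semiclassicalLaguerre (ha : -1 < a) (t : ℝ) (p : ℝ[X]) :
    ∫ x, (X * derivative p + C (a + 1) * p + C (-2) * (X * (X * p)) + C t * (X * p)).eval x *
      exp (t * x) ∂semiclassicalLaguerre a = 0 := by
  have integrable (q : ℝ[X]) := integrable_semiclassicalLaguerre_iff.1
    (integrable_eval_mul_exp (integrableExpSet_semiclassicalLaguerre ha) q t)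
  have hderiv (x : ℝ) (hx : x ∈ Ioi 0) := hasDerivAt_rpow_mul_exp_neg_sq_mul_eval a t p hx
  have vanishes_atTop := tendsto_zero_of_hasDerivAt_of_integrableOn_Ioi hderiv (integrable _)
    (integrable _)
  rw [integral_semiclassicalLaguerre, integral_Ioi_of_hasDerivAt_of_tendsto
    (continuousWithinAt_rpow_mul_exp_neg_sq_mul_eval ha t p) hderiv (integrable _) vanishes_atTop]
  simp

/-- The moment functional `p ↦ ∫ p(x) x ^ a exp (-x² - 2 s x) dx` on the half-line, with values in
smooth functions of `s`. -/
def laguerreFunctional (ha : -1 < a) : smoothFunctions[X] →ₗ[smoothFunctions] smoothFunctions :=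
  expMomentFunctional (integrableExpSet_semiclassicalLaguerre ha) (-2)

variable (ha : -1 < a)

theorem isExpDeformation_laguerreFunctional : IsExpDeformation (laguerreFunctional ha) (-2) := by
  simpa only [laguerreFunctional, map_neg, map_ofNat] using
    isExpDeformation_expMomentFunctional (integrableExpSet_semiclassicalLaguerre ha) (-2)

theorem isQuasiDefinite_laguerreFunctional : IsQuasiDefinite (laguerreFunctional ha) :=
  isQuasiDefinite_expMomentFunctional not_ae_mem_finset_semiclassicalLaguerre

theorem evalAt_normSq_laguerreFunctional_pos (k : ℕ) (s : ℝ) :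
    0 < evalAt s (normSq (laguerreFunctional ha) k) :=
  evalAt_normSq_expMomentFunctional_pos not_ae_mem_finset_semiclassicalLaguerre k s

theorem satisfiesPearson_laguerreFunctional :
    SatisfiesPearson (laguerreFunctional ha) (algebraMap ℝ _ a) smoothId := by
  intro p
  have pearson_map (s : ℝ) : (X * derivative p + C (algebraMap ℝ _ a + 1) * p +
      C (-2) * (X * (X * p)) + C (-2 * smoothId) * (X * p)).map (evalAt s) =
        X * derivative (p.map (evalAt s)) + C (a + 1) * p.map (evalAt s) +
          C (-2) * (X * (X * p.map (evalAt s))) + C (-2 * s) * (X * p.map (evalAt s)) := by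
    have evalAt_two : evalAt s 2 = 2 := map_ofNat (evalAt s) 2
    simp [derivative_map, evalAt_two, smoothFunctions.evalAt_algebraMap,
      smoothFunctions.evalAt_smoothId]
  have pearson : laguerreFunctional ha (X * derivative p + C (algebraMap ℝ _ a + 1) * p +
      C (-2) * (X * (X * p)) + C (-2 * smoothId) * (X * p)) = 0 :=
    smoothFunctions.ext_evalAt fun s => by
      rw [laguerreFunctional, evalAt_expMomentFunctional, pearson_map,
        integral_pearson_semiclassicalLaguerre ha, map_zero]
  rw [map_add, map_add, map_add, map_C_mul, map_C_mul, map_C_mul] at pearson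
  linear_combination pearson

end SemiclassicalLaguerre

/-! ### The matrix integral -/

section MatrixIntegral

theorem measurePreserving_sub_pi_Ici {ι : Type*} [Fintype ι] (s : ℝ) :
    MeasurePreserving (fun (z : ι → ℝ) i => z i - s)
      (volume.restrict (univ.pi fun _ => Ici s))
      (Measure.pi fun _ => volume.restrict (Ioi 0)) := by
  have coordinate : MeasurePreserving (fun x : ℝ => x - s) (volume.restrict (Ici s))
      (volume.restrict (Ioi 0)) := by
    simpa [Measure.restrict_congr_set (Ioi_ae_eq_Ici (a := s))] using
      (measurePreserving_sub_right volume s).restrict_preimage (measurableSet_Ioi (a := 0))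
  rw [volume_pi, Measure.restrict_pi_pi]
  exact measurePreserving_pi _ _ fun _ => coordinate

theorem measurableEmbedding_sub_pi {ι : Type*} (s : ℝ) :
    MeasurableEmbedding fun (z : ι → ℝ) i => z i - s :=
  (MeasurableEquiv.subRight fun _ : ι => s).measurableEmbedding

/-- The weight `(z - s) ^ a exp (-z²)` of the matrix integral in the variable `x = z - s`. -/
def shiftedWeight (a s x : ℝ) : ℝ := x ^ a * exp (-(x + s) ^ 2)

theorem shiftedWeight_eq_mul_exp (a s x : ℝ) :
    shiftedWeight a s x = exp (-s ^ 2) * (x ^ a * exp (-x ^ 2) * exp (-2 * s * x)) := by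
  have split_exp : exp (-(x + s) ^ 2) = exp (-s ^ 2) * (exp (-x ^ 2) * exp (-2 * s * x)) := by
    rw [← exp_add, ← exp_add]
    congr 1
    ring
  rw [shiftedWeight, split_exp]
  ring

theorem vdm_sq_mul_prod_rpow_mul_exp {n : ℕ} (a s : ℝ) (z : Fin n → ℝ) :
    vdm z ^ 2 * ∏ i, ((z i - s) ^ a * exp (-(z i ^ 2))) =
      vdm (fun i => z i - s) ^ 2 * ∏ i, shiftedWeight a s (z i - s) := by
  simp only [vdm, shiftedWeight, sub_sub_sub_cancel_right, sub_add_cancel]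

variable {a : ℝ}

theorem integrableOn_shiftedWeight_mul_eval (ha : -1 < a) (s : ℝ) (p : ℝ[X]) :
    IntegrableOn (fun x => shiftedWeight a s x * p.eval x) (Ioi 0) := by
  have tilted := integrable_semiclassicalLaguerre_iff.1
    (integrable_eval_mul_exp (integrableExpSet_semiclassicalLaguerre ha) p (-2 * s))
  refine IntegrableOn.congr_fun (tilted.const_mul (exp (-s ^ 2))) (fun x _ => ?_) measurableSet_Ioi
  rw [shiftedWeight_eq_mul_exp]
  ring

theorem integral_shiftedWeight_mul_eval_map (ha : -1 < a) (s : ℝ) (p : smoothFunctions[X]) :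
    ∫ x in Ioi 0, shiftedWeight a s x * (p.map (evalAt s)).eval x =
      exp (-s ^ 2) * evalAt s (laguerreFunctional ha p) := by
  rw [laguerreFunctional, evalAt_expMomentFunctional, integral_semiclassicalLaguerre,
    ← integral_const_mul]
  congr 1 with x
  rw [shiftedWeight_eq_mul_exp]
  ring

/-- The specialisation at `s` of the monic orthogonal polynomial of degree `k` of
`laguerreFunctional`: a real polynomial, orthogonal for the weight `shiftedWeight a s`. -/
def orthoPolyAt (ha : -1 < a) (s : ℝ) (k : ℕ) : ℝ[X] :=
  (orthoPoly (laguerreFunctional ha) (k + 1)).map (evalAt s)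

theorem orthoPolyAt_monic (ha : -1 < a) (s : ℝ) (k : ℕ) : (orthoPolyAt ha s k).Monic :=
  (orthoPoly_monic _ k).map _

theorem natDegree_orthoPolyAt (ha : -1 < a) (s : ℝ) (k : ℕ) :
    (orthoPolyAt ha s k).natDegree = k := by
  rw [orthoPolyAt, (orthoPoly_monic _ k).natDegree_map, natDegree_orthoPoly]

theorem integral_shiftedWeight_mul_orthoPolyAt_of_lt (ha : -1 < a) (s : ℝ) {i j : ℕ}
    (hij : i < j) :
    ∫ x in Ioi 0, shiftedWeight a s x * (orthoPolyAt ha s j * orthoPolyAt ha s i).eval x = 0 := by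
  rw [orthoPolyAt, orthoPolyAt, ← Polynomial.map_mul, integral_shiftedWeight_mul_eval_map ha,
    map_orthoPoly_mul_orthoPoly (isQuasiDefinite_laguerreFunctional ha) (Nat.succ_lt_succ hij),
    map_zero, mul_zero]

theorem integral_shiftedWeight_mul_orthoPolyAt_sq (ha : -1 < a) (s : ℝ) (k : ℕ) :
    ∫ x in Ioi 0, shiftedWeight a s x * (orthoPolyAt ha s k * orthoPolyAt ha s k).eval x =
      exp (-s ^ 2) * evalAt s (normSq (laguerreFunctional ha) k) := by
  rw [orthoPolyAt, ← Polynomial.map_mul, integral_shiftedWeight_mul_eval_map ha, normSq]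

theorem integrableOn_matInt4 (ha : -1 < a) (s : ℝ) (n : ℕ) :
    IntegrableOn (fun z : Fin n → ℝ => vdm z ^ 2 * ∏ i, ((z i - s) ^ a * exp (-(z i ^ 2))))
      (univ.pi fun _ : Fin n => Ici s) := by
  simp only [vdm_sq_mul_prod_rpow_mul_exp]
  exact ((measurePreserving_sub_pi_Ici s).integrable_comp_emb (measurableEmbedding_sub_pi s)).2
    (integrable_vdm_sq_mul_prod (orthoPolyAt_monic ha s) (natDegree_orthoPolyAt ha s)
      fun _ _ => integrableOn_shiftedWeight_mul_eval ha s _)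

theorem matInt4_eq_factorial_mul_prod_normSq (ha : -1 < a) (s : ℝ) (n : ℕ) :
    matInt4 n a s = n.factorial *
      (exp (-s ^ 2) ^ n * evalAt s (∏ k ∈ Finset.range n, normSq (laguerreFunctional ha) k)) := by
  simp only [matInt4, vdm_sq_mul_prod_rpow_mul_exp]
  rw [(measurePreserving_sub_pi_Ici s).integral_comp (measurableEmbedding_sub_pi s)
      (fun z => vdm z ^ 2 * ∏ i, shiftedWeight a s (z i)),
    integral_vdm_sq_mul_prod (orthoPolyAt_monic ha s) (natDegree_orthoPolyAt ha s)
      (fun _ _ => integrableOn_shiftedWeight_mul_eval ha s _)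
      (fun _ _ => integral_shiftedWeight_mul_orthoPolyAt_of_lt ha s)]
  simp only [integral_shiftedWeight_mul_orthoPolyAt_sq, Finset.prod_mul_distrib,
    Finset.prod_const, Finset.card_range, map_prod]

theorem evalAt_prod_normSq_pos (ha : -1 < a) (s : ℝ) (n : ℕ) :
    0 < evalAt s (∏ k ∈ Finset.range n, normSq (laguerreFunctional ha) k) := by
  rw [map_prod]
  exact Finset.prod_pos fun k _ => evalAt_normSq_laguerreFunctional_pos ha k s

theorem matInt4_pos (ha : -1 < a) (s : ℝ) (n : ℕ) : 0 < matInt4 n a s := by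
  have := evalAt_prod_normSq_pos ha s n
  rw [matInt4_eq_factorial_mul_prod_normSq ha]
  positivity

theorem log_matInt4 (ha : -1 < a) (s : ℝ) (n : ℕ) :
    log (matInt4 n a s) = log n.factorial + (-(n * s ^ 2) +
      log (evalAt s (∏ k ∈ Finset.range n, normSq (laguerreFunctional ha) k))) := by
  rw [matInt4_eq_factorial_mul_prod_normSq ha, log_mul (by positivity) (mul_pos (by positivity)
    (evalAt_prod_normSq_pos ha s n)).ne', log_mul (by positivity)
    (evalAt_prod_normSq_pos ha s n).ne', log_pow, log_exp, mul_neg]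

theorem contDiff_log_matInt4 (ha : -1 < a) (n : ℕ) :
    ContDiff ℝ (⊤ : ℕ∞) fun s => log (matInt4 n a s) := by
  simp only [log_matInt4 ha]
  exact contDiff_const.add (ContDiff.add (by fun_prop)
    ((smoothFunctions.contDiff _).log fun s => (evalAt_prod_normSq_pos ha s n).ne'))

theorem hlog4_eq_jacobiTrace (ha : -1 < a) (n : ℕ) :
    hlog4 n a = ((-2 * n * smoothId - 2 * jacobiTrace (laguerreFunctional ha) n :
      smoothFunctions) : ℝ → ℝ) := by
  ext s
  have deriv_prod : HasDerivAt
      (fun s => evalAt s (∏ k ∈ Finset.range n, normSq (laguerreFunctional ha) k))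
      (evalAt s ((∏ k ∈ Finset.range n, normSq (laguerreFunctional ha) k)′)) s :=
    (smoothFunctions.differentiable _ s).hasDerivAt
  have deriv_sq : HasDerivAt (fun s : ℝ => -(n * s ^ 2)) (-(n * (2 * s))) s := by
    simpa using ((hasDerivAt_pow 2 s).const_mul (n : ℝ)).fun_neg
  have ne_zero := (evalAt_prod_normSq_pos ha s n).ne'
  simp only [hlog4, log_matInt4 ha]
  rw [((deriv_sq.fun_add (deriv_prod.log ne_zero)).const_add _).deriv,
    (isExpDeformation_laguerreFunctional ha).deriv_prod_normSq
      (isQuasiDefinite_laguerreFunctional ha), map_mul, mul_div_cancel_right₀ _ ne_zero,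
    ← smoothFunctions.evalAt_apply]
  simp only [map_sub, map_mul, map_neg, map_ofNat, map_natCast, smoothFunctions.evalAt_smoothId]
  ring

end MatrixIntegral

/-- the integral is finite and positive, its logarithm is smooth, and
`h(s)` satisfies the Painlevé IV type equation
`h‴ + 6h′² − 4(s² + 2(a−n))h′ + 4sh − 8an = 0`. -/
theorem statement5 (n : ℕ) (hn : 1 ≤ n) (a : ℝ) (ha : -1 < a) :
    (∀ s : ℝ,
      IntegrableOn
        (fun z : Fin n → ℝ => vdm z ^ 2 * ∏ i, ((z i - s) ^ a * Real.exp (-(z i ^ 2))))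
        (Set.univ.pi fun _ : Fin n => Set.Ici s) ∧
      0 < matInt4 n a s) ∧
    ContDiff ℝ (⊤ : ℕ∞) (fun s => Real.log (matInt4 n a s)) ∧
    ∀ s : ℝ,
      iteratedDeriv 3 (hlog4 n a) s + 6 * (deriv (hlog4 n a) s) ^ 2 -
        4 * (s ^ 2 + 2 * (a - n)) * deriv (hlog4 n a) s +
        4 * s * hlog4 n a s - 8 * a * n = 0 := by
  refine ⟨fun s => ⟨integrableOn_matInt4 ha s n, matInt4_pos ha s n⟩,
    contDiff_log_matInt4 ha n, fun s => ?_⟩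
  obtain ⟨k, rfl⟩ := Nat.exists_eq_add_of_le' hn
  obtain ⟨h, hh⟩ : ∃ h, h = -2 * (k + 1 : ℕ) * smoothId -
    2 * jacobiTrace (laguerreFunctional ha) (k + 1) := ⟨_, rfl⟩
  have hlog4_eq_h : hlog4 (k + 1) a = h := hh ▸ hlog4_eq_jacobiTrace ha (k + 1)
  have painleve := congrArg (evalAt s) <| painleveIV_of_isExpDeformation_of_satisfiesPearson
    (isExpDeformation_laguerreFunctional ha) (isQuasiDefinite_laguerreFunctional ha)
    (satisfiesPearson_laguerreFunctional ha) smoothFunctions.deriv_smoothId k hh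
  simp only [map_sub, map_mul, map_add, map_pow, map_zero, map_ofNat, map_natCast,
    smoothFunctions.evalAt_algebraMap, smoothFunctions.evalAt_smoothId] at painleve
  simpa only [iteratedDeriv_succ, iteratedDeriv_zero, hlog4_eq_h, smoothFunctions.evalAt_apply,
    smoothFunctions.coe_deriv] using painleve

end
end

section
/- Let n ≥ 1 be an integer and a, b > −1 real numbers. Define k(s) := s · (d/ds) log ∫_{[0,s]^n} Δ_n(z)² ∏_{i=1}^n (s − z_i)^b z_i^a e^{−z_i} dz for s > 0. Then k satisfies the Painlevé V type equation k‴ + k″/s + (6/s)(k′)² − (4/s²) k k′ − ( s² − 2s(2n + a − b) + (a+b)² ) k′/s² + ( s − 2n − a + b ) k/s² − (bn/s²)(s + a + b) = 0 for all s > 0. -/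
open MeasureTheory Filter Real
open scoped BigOperators Topology

noncomputable section

/-- The matrix-model integral `∫_{[0,s]^n} Δ_n(z)² ∏ (s − z_i)^b z_i^a e^{−z_i} dz`. -/
def matInt5 (n : ℕ) (a b : ℝ) (s : ℝ) : ℝ :=
  ∫ z in Set.univ.pi fun _ : Fin n => Set.Icc 0 s,
    vdm z ^ 2 * ∏ i, ((s - z i) ^ b * z i ^ a * Real.exp (-z i))

/-- `k(s) = s (d/ds) log` of the above integral. -/
def klog5 (n : ℕ) (a b : ℝ) (s : ℝ) : ℝ :=
  s * deriv (fun t => Real.log (matInt5 n a b t)) s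

/-!
Rescaling `[0, s]` to `[0, 1]` turns the integral into `s ^ (n ^ 2 + n * (a + b))` times the
integral of `Δ²` against copies of the weight `x ^ a * (1 - x) ^ b * exp (-s * x)`, so
differentiating its logarithm in `s` produces the cumulants of `p₁ = ∑ i, x i` under the
density `Δ²`.

By Andréief's identity, the means of Schur polynomials are Hankel-type determinants of one-variable
moments, and a three-term Plücker relation between them becomes the KP relation among the means of
products of power sums up to degree four. Integration by parts along
`∑ i, x i ^ (k + 1) * (1 - x i) * ∂ i` for `k = 0, 1` gives loop (Virasoro) equations that express
the means involving `p₂` and `p₃` through those of powers of `p₁`. What remains of the KP relation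
is a relation between the first four cumulants of `p₁`, which is the differential equation.
-/

section MomentFunctional

open MvPolynomial

variable {ι R : Type*} [Fintype ι] [CommRing R]

/-- The linear functional `∏ i, X i ^ m i ↦ ∏ i, μ (m i)`: integration against the product of copies
of a one-dimensional functional with moments `μ`. -/
def momentFunctional (ι : Type*) [Fintype ι] (μ : ℕ → R) : MvPolynomial ι R →ₗ[R] R :=
  (basisMonomials ι R).constr R fun m => ∏ i, μ (m i)

theorem momentFunctional_monomial (μ : ℕ → R) (m : ι →₀ ℕ) (c : R) :
    momentFunctional ι μ (monomial m c) = c * ∏ i, μ (m i) := by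
  have hc : monomial m c = c • basisMonomials ι R m := by simp [smul_monomial]
  rw [hc, map_smul, momentFunctional, Module.Basis.constr_basis, smul_eq_mul]

theorem momentFunctional_prod_X_pow (μ : ℕ → R) (g : ι → ℕ) :
    momentFunctional ι μ (∏ i, X i ^ g i) = ∏ i, μ (g i) := by
  have hg : ∏ i, X i ^ g i = monomial (R := R) (Finsupp.equivFunOnFinite.symm g) 1 := by
    simp [monomial_eq, Finsupp.prod_fintype]
  rw [hg, momentFunctional_monomial, one_mul]
  rfl

theorem momentFunctional_X_pow_mul_monomial [DecidableEq ι] (μ : ℕ → R) (i : ι) (k : ℕ)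
    (m : ι →₀ ℕ) (c : R) :
    momentFunctional ι μ (X i ^ k * monomial m c) =
      c * (μ (m i + k) * ∏ j ∈ Finset.univ.erase i, μ (m j)) := by
  rw [X_pow_eq_monomial, monomial_mul, one_mul, momentFunctional_monomial,
    ← Finset.mul_prod_erase _ _ (Finset.mem_univ i)]
  congr 2
  · simp [add_comm]
  · refine Finset.prod_congr rfl fun j hj => ?_
    simp [Finsupp.single_eq_of_ne (Finset.ne_of_mem_erase hj)]

variable [DecidableEq ι]

theorem momentFunctional_det_X_pow (μ : ℕ → R) (σ : Equiv.Perm ι) (g : ι → ι → ℕ) :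
    momentFunctional ι μ (Matrix.of fun i j => X (σ i) ^ g i j).det =
      (Matrix.of fun i j => μ (g i j)).det := by
  simp only [← Matrix.det_transpose (Matrix.of _), Matrix.det_apply, map_sum,
    Matrix.transpose_apply, Matrix.of_apply, Units.smul_def, map_zsmul]
  refine Finset.sum_congr rfl fun τ _ => ?_
  have hreindex : ∏ i, X (R := R) (σ i) ^ g i (τ i) = ∏ i, X i ^ g (σ.symm i) (τ (σ.symm i)) := by
    simpa using (Equiv.prod_comp σ fun i => X (R := R) i ^ g (σ.symm i) (τ (σ.symm i)))
  rw [hreindex, momentFunctional_prod_X_pow, Equiv.prod_comp σ.symm fun i => μ (g i (τ i))]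

/-- The alternant `det (X i ^ e j)`. -/
def alternant (R : Type*) [CommRing R] (e : ι → ℕ) : MvPolynomial ι R :=
  (Matrix.of fun i j => X i ^ e j).det

theorem alternant_mul_alternant (e f : ι → ℕ) :
    alternant R e * alternant R f =
      ∑ σ : Equiv.Perm ι, (Matrix.of fun i j => X (R := R) (σ i) ^ (e i + f j)).det := by
  rw [alternant, Matrix.det_apply', Finset.sum_mul]
  refine Finset.sum_congr rfl fun σ _ => ?_
  have hpermute := Matrix.det_permute σ (Matrix.of fun i j => X (R := R) i ^ f j)
  rw [alternant, mul_right_comm, ← hpermute, mul_comm]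
  simpa only [Matrix.submatrix_apply, Matrix.of_apply, id, ← pow_add] using
    (Matrix.det_mul_column (fun i => X (R := R) (σ i) ^ e i)
      ((Matrix.of fun i j => X (R := R) i ^ f j).submatrix σ id)).symm

theorem momentFunctional_alternant_mul_alternant (μ : ℕ → R) (e f : ι → ℕ) :
    momentFunctional ι μ (alternant R e * alternant R f) =
      (Fintype.card ι).factorial * (Matrix.of fun i j => μ (e i + f j)).det := by
  rw [alternant_mul_alternant, map_sum,
    Finset.sum_congr rfl fun σ _ => momentFunctional_det_X_pow μ σ fun i j => e i + f j,
    Finset.sum_const, Finset.card_univ, Fintype.card_perm, nsmul_eq_mul]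

end MomentFunctional

section Pluecker

open scoped Matrix

variable {ι R : Type*} [Fintype ι] [DecidableEq ι] [CommRing R]

theorem det_updateCol_updateCol_one {i j : ι} (hij : i ≠ j) (γ δ : ι → R) :
    (((1 : Matrix ι ι R).updateCol i γ).updateCol j δ).det = γ i * δ j - γ j * δ i := by
  have hrank : ((1 : Matrix ι ι R).updateCol i γ).updateCol j δ =
      1 + (Matrix.of ![γ - Pi.single i 1, δ - Pi.single j 1])ᵀ *
        (Matrix.of ![Pi.single i 1, Pi.single j 1] : Matrix (Fin 2) ι R) := by
    ext k l
    by_cases hlj : l = j <;> by_cases hli : l = i <;>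
      simp_all [Matrix.mul_apply, Fin.sum_univ_two, Pi.single_apply,
        Matrix.one_apply]
  rw [hrank, Matrix.det_one_add_mul_comm, Matrix.det_fin_two]
  simp [hij, hij.symm, mul_comm]

theorem det_updateCol_updateCol_mulVec (M : Matrix ι ι R) {i j : ι} (hij : i ≠ j) (γ δ : ι → R) :
    ((M.updateCol i (M.mulVec γ)).updateCol j (M.mulVec δ)).det =
      M.det * (γ i * δ j - γ j * δ i) := by
  have hmul : (M.updateCol i (M.mulVec γ)).updateCol j (M.mulVec δ) =
      M * ((1 : Matrix ι ι R).updateCol i γ).updateCol j δ := by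
    simp only [Matrix.mul_updateCol, mul_one]
  rw [hmul, Matrix.det_mul, det_updateCol_updateCol_one hij]

theorem det_updateCol_updateCol_pluecker (M : Matrix ι ι R) (hM : IsUnit M.det) {i j : ι}
    (hij : i ≠ j) (u v w z : ι → R) :
    ((M.updateCol i u).updateCol j v).det * ((M.updateCol i w).updateCol j z).det -
      ((M.updateCol i u).updateCol j w).det * ((M.updateCol i v).updateCol j z).det +
      ((M.updateCol i u).updateCol j z).det * ((M.updateCol i v).updateCol j w).det = 0 := by
  have hcoords (x : ι → R) : M.mulVec (M⁻¹.mulVec x) = x := by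
    rw [Matrix.mulVec_mulVec, Matrix.mul_nonsing_inv M hM, Matrix.one_mulVec]
  have hminor (x y : ι → R) : ((M.updateCol i x).updateCol j y).det =
      M.det * (M⁻¹.mulVec x i * M⁻¹.mulVec y j - M⁻¹.mulVec x j * M⁻¹.mulVec y i) := by
    simpa only [hcoords] using
      det_updateCol_updateCol_mulVec M hij (M⁻¹.mulVec x) (M⁻¹.mulVec y)
  simp only [hminor]
  ring

end Pluecker

section Vieta

open MvPolynomial

variable {ι R : Type*} [Fintype ι] [CommRing R]

theorem esymm_eq_zero_of_card_lt {k : ℕ} (hk : Fintype.card ι < k) : esymm ι R k = 0 := by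
  rw [esymm, Finset.powersetCard_eq_empty.2 (by simpa using hk), Finset.sum_empty]

theorem sum_neg_one_pow_mul_esymm_mul_X_pow (i : ι) {N : ℕ} (hN : Fintype.card ι ≤ N) :
    ∑ k ∈ Finset.range (N + 1), (-1) ^ (N - k) * esymm ι R (N - k) * X i ^ k = 0 := by
  induction N, hN using Nat.le_induction with
  | base =>
    have hvieta := congrArg (Polynomial.eval (X i))
      (Multiset.prod_X_sub_X_eq_sum_esymm (Finset.univ.val.map (X (R := R) (σ := ι))))
    have hzero : ∏ j : ι, (X (R := R) i - X j) = 0 :=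
      Finset.prod_eq_zero (Finset.mem_univ i) (sub_self _)
    calc _ = ∑ k ∈ Finset.range (Fintype.card ι + 1),
            (-1) ^ k * esymm ι R k * X i ^ (Fintype.card ι - k) := by
          rw [← Finset.sum_flip]
          refine Finset.sum_congr rfl fun k hk => ?_
          rw [Nat.sub_sub_self (Finset.mem_range_succ_iff.1 hk)]
      _ = 0 := by
          simpa [Polynomial.eval_finsetSum, Polynomial.eval_prod, hzero, mul_assoc,
            esymm_eq_multiset_esymm ι R] using hvieta.symm
  | succ N hN ih =>
    rw [Finset.sum_range_succ', Nat.sub_zero, esymm_eq_zero_of_card_lt (Nat.lt_succ_of_le hN),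
      mul_zero, zero_mul, add_zero, ← zero_mul (X i), ← ih, Finset.sum_mul]
    simp only [Nat.add_sub_add_right, pow_succ, mul_assoc]

theorem esymm_one_eq_psum : esymm ι R 1 = psum ι R 1 := by
  simp [esymm_one, psum]

theorem psum_two_eq_esymm : psum ι R 2 = esymm ι R 1 ^ 2 - 2 * esymm ι R 2 := by
  have hpairs : {a ∈ Finset.HasAntidiagonal.antidiagonal 2 | a.1 < 2} = {(0, 2), (1, 1)} := by
    decide
  have hnewton := mul_esymm_eq_sum ι R 2
  rw [hpairs, Finset.sum_pair (by decide), esymm_one_eq_psum, esymm_zero] at hnewton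
  rw [esymm_one_eq_psum]
  push_cast at hnewton
  linear_combination hnewton

theorem psum_three_eq_esymm :
    psum ι R 3 = esymm ι R 1 ^ 3 - 3 * esymm ι R 1 * esymm ι R 2 + 3 * esymm ι R 3 := by
  have hpairs : {a ∈ Finset.HasAntidiagonal.antidiagonal 3 | a.1 < 3} =
      {(0, 3), (1, 2), (2, 1)} := by
    decide
  have hnewton := mul_esymm_eq_sum ι R 3
  rw [hpairs, Finset.sum_insert (by decide), Finset.sum_pair (by decide), psum_two_eq_esymm,
    ← esymm_one_eq_psum, esymm_zero] at hnewton
  push_cast at hnewton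
  linear_combination -hnewton

end Vieta

section TwoRow

open MvPolynomial

variable {R : Type*} [CommRing R]

/-- The exponents `0, …, m - 1, m + q, m + 1 + p`; their alternant is the Vandermonde determinant
times the Schur polynomial of the two-row partition `(p, q)`. -/
def twoRowExponents (m p q : ℕ) : Fin (m + 2) → ℕ :=
  Function.update (Function.update Fin.val (Fin.last m).castSucc (m + q)) (Fin.last (m + 1))
    (m + 1 + p)

theorem twoRowExponents_zero_zero (m : ℕ) : twoRowExponents m 0 0 = Fin.val := by
  ext i
  simp only [twoRowExponents, Function.update_apply]
  split_ifs with hlast hprev <;> simp [*]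

theorem det_twoRowExponents {m : ℕ} (g : Fin (m + 2) → ℕ → R) (p q : ℕ) :
    (Matrix.of fun i j => g i (twoRowExponents m p q j)).det =
      (((Matrix.of fun i (j : Fin (m + 2)) => g i j).updateCol (Fin.last m).castSucc
        fun i => g i (m + q)).updateCol (Fin.last (m + 1)) fun i => g i (m + 1 + p)).det := by
  congr 1
  ext i j
  simp only [twoRowExponents, Matrix.of_apply, Matrix.updateCol_apply, Function.update_apply,
    apply_ite (g i)]

theorem det_twoRowExponents_pluecker {m : ℕ} (g : Fin (m + 2) → ℕ → R)
    (hg : IsUnit (Matrix.of fun i (j : Fin (m + 2)) => g i j).det) :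
    letI D p q := (Matrix.of fun i j => g i (twoRowExponents m p q j)).det
    D 0 0 * D 2 2 - D 1 0 * D 2 1 + D 2 0 * D 1 1 = 0 := by
  simp only [det_twoRowExponents]
  exact det_updateCol_updateCol_pluecker _ hg (Fin.castSucc_lt_last (Fin.last m)).ne
    (fun i => g i m) (fun i => g i (m + 1)) (fun i => g i (m + 2)) fun i => g i (m + 3)

/-- The coefficients with which `X i ^ n, …, X i ^ N` combine to a polynomial in `X i` of degree
less than `n`, in the form produced by Vieta's formulas. -/
def vietaCoeff (R : Type*) [CommRing R] (n N : ℕ) (j : Fin n) : MvPolynomial (Fin n) R :=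
  -((-1) ^ (N - j) * esymm (Fin n) R (N - j))

theorem vandermonde_X_mulVec_single {n : ℕ} (k : Fin n) :
    (Matrix.vandermonde (X (R := R))).mulVec (Pi.single k 1) = fun i => X i ^ (k : ℕ) := by
  ext1 i
  simp [Matrix.vandermonde_apply]

theorem vandermonde_X_mulVec_vietaCoeff {n N : ℕ} (hN : n ≤ N) (i : Fin n) :
    (Matrix.vandermonde X).mulVec (vietaCoeff R n N) i =
      ∑ k ∈ Finset.Ico n (N + 1), (-1) ^ (N - k) * esymm (Fin n) R (N - k) * X i ^ k := by
  have hvieta := sum_neg_one_pow_mul_esymm_mul_X_pow (R := R) i (N := N) (by simpa using hN)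
  rw [← Finset.sum_range_add_sum_Ico _ (hN.trans N.le_succ), ← Fin.sum_univ_eq_sum_range
    fun k => (-1) ^ (N - k) * esymm (Fin n) R (N - k) * X i ^ k] at hvieta
  rw [← neg_eq_iff_add_eq_zero.2 hvieta, Matrix.mulVec, dotProduct, ← Finset.sum_neg_distrib]
  refine Finset.sum_congr rfl fun j _ => ?_
  rw [Matrix.vandermonde_apply, vietaCoeff]
  ring

theorem vandermonde_X_mulVec_vietaCoeff_self (n : ℕ) :
    (Matrix.vandermonde X).mulVec (vietaCoeff R n n) = fun i => X i ^ n := by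
  ext1 i
  simp [vandermonde_X_mulVec_vietaCoeff]

theorem vandermonde_X_mulVec_vietaCoeff_succ (n : ℕ) :
    (Matrix.vandermonde X).mulVec
        (vietaCoeff R n (n + 1) + esymm (Fin n) R 1 • vietaCoeff R n n) =
      fun i => X i ^ (n + 1) := by
  ext1 i
  rw [Matrix.mulVec_add, Matrix.mulVec_smul, vandermonde_X_mulVec_vietaCoeff_self, Pi.add_apply,
    vandermonde_X_mulVec_vietaCoeff n.le_succ, Finset.sum_Ico_succ_top (by lia),
    Nat.Ico_succ_singleton]
  simp

theorem alternant_twoRowExponents {m p q : ℕ} {γ δ : Fin (m + 2) → MvPolynomial (Fin (m + 2)) R}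
    (hγ : (Matrix.vandermonde X).mulVec γ = fun i => X i ^ (m + q))
    (hδ : (Matrix.vandermonde X).mulVec δ = fun i => X i ^ (m + 1 + p)) :
    alternant R (twoRowExponents m p q) = alternant R Fin.val *
      (γ (Fin.last m).castSucc * δ (Fin.last (m + 1)) -
        γ (Fin.last (m + 1)) * δ (Fin.last m).castSucc) := by
  rw [alternant, det_twoRowExponents fun i k => X (R := R) i ^ k, ← hγ, ← hδ]
  exact det_updateCol_updateCol_mulVec (Matrix.vandermonde X) (Fin.castSucc_lt_last _).ne γ δ

variable (R) (m : ℕ)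

theorem alternant_twoRowExponents_one_zero :
    alternant R (twoRowExponents m 1 0) = alternant R Fin.val * esymm (Fin (m + 2)) R 1 := by
  refine (alternant_twoRowExponents (vandermonde_X_mulVec_single (Fin.last m).castSucc)
    (vandermonde_X_mulVec_vietaCoeff_self (m + 2))).trans ?_
  simp [vietaCoeff]

theorem alternant_twoRowExponents_two_zero :
    alternant R (twoRowExponents m 2 0) =
      alternant R Fin.val * (esymm (Fin (m + 2)) R 1 ^ 2 - esymm (Fin (m + 2)) R 2) := by
  refine (alternant_twoRowExponents (vandermonde_X_mulVec_single (Fin.last m).castSucc)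
    (vandermonde_X_mulVec_vietaCoeff_succ (m + 2))).trans ?_
  simp only [vietaCoeff, Pi.add_apply, Pi.smul_apply, smul_eq_mul, Pi.single_eq_same,
    Pi.single_eq_of_ne' (Fin.castSucc_ne_last _), Fin.val_last, Fin.val_castSucc, add_assoc,
    Nat.reduceAdd, Nat.reduceSubDiff, add_tsub_cancel_left]
  ring

theorem alternant_twoRowExponents_one_one :
    alternant R (twoRowExponents m 1 1) = alternant R Fin.val * esymm (Fin (m + 2)) R 2 := by
  refine (alternant_twoRowExponents (vandermonde_X_mulVec_single (Fin.last (m + 1)))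
    (vandermonde_X_mulVec_vietaCoeff_self (m + 2))).trans ?_
  simp [vietaCoeff]

theorem alternant_twoRowExponents_two_one :
    alternant R (twoRowExponents m 2 1) = alternant R Fin.val *
      (esymm (Fin (m + 2)) R 1 * esymm (Fin (m + 2)) R 2 - esymm (Fin (m + 2)) R 3) := by
  refine (alternant_twoRowExponents (vandermonde_X_mulVec_single (Fin.last (m + 1)))
    (vandermonde_X_mulVec_vietaCoeff_succ (m + 2))).trans ?_
  simp only [vietaCoeff, Pi.add_apply, Pi.smul_apply, smul_eq_mul, Pi.single_eq_same,
    Pi.single_eq_of_ne (Fin.castSucc_ne_last _), Fin.val_last, Fin.val_castSucc, add_assoc,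
    Nat.reduceAdd, Nat.reduceSubDiff, add_tsub_cancel_left]
  ring

theorem alternant_twoRowExponents_two_two :
    alternant R (twoRowExponents m 2 2) = alternant R Fin.val *
      (esymm (Fin (m + 2)) R 2 ^ 2 - esymm (Fin (m + 2)) R 1 * esymm (Fin (m + 2)) R 3) := by
  refine (alternant_twoRowExponents (vandermonde_X_mulVec_vietaCoeff_self (m + 2))
    (vandermonde_X_mulVec_vietaCoeff_succ (m + 2))).trans ?_
  simp only [vietaCoeff, Pi.add_apply, Pi.smul_apply, smul_eq_mul, Fin.val_last, Fin.val_castSucc,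
    add_assoc, Nat.reduceAdd, Nat.reduceSubDiff, add_tsub_cancel_left]
  ring

end TwoRow

section KP

open MvPolynomial

variable {R : Type*} [CommRing R]

/-- The Hankel matrix of a sequence. -/
def hankel (n : ℕ) (μ : ℕ → R) : Matrix (Fin n) (Fin n) R :=
  Matrix.of fun i j => μ (i + j)

/-- The functional `f ↦ ∫ Δ² f`, where `Δ` is the Vandermonde determinant in `n` variables and
integration is against the product functional with moments `μ`. -/
def ensembleFunctional (n : ℕ) (μ : ℕ → R) : MvPolynomial (Fin n) R →ₗ[R] R :=
  momentFunctional (Fin n) μ ∘ₗ LinearMap.mulLeft R (alternant R Fin.val ^ 2)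

theorem ensembleFunctional_apply (n : ℕ) (μ : ℕ → R) (f : MvPolynomial (Fin n) R) :
    ensembleFunctional n μ f = momentFunctional (Fin n) μ (alternant R Fin.val ^ 2 * f) :=
  rfl

theorem ensembleFunctional_of_alternant_eq {n : ℕ} (μ : ℕ → R) {e : Fin n → ℕ}
    {f : MvPolynomial (Fin n) R} (hf : alternant R e = alternant R Fin.val * f) :
    ensembleFunctional n μ f = n.factorial * (Matrix.of fun i j : Fin n => μ (i + e j)).det := by
  rw [ensembleFunctional_apply, sq, mul_assoc, ← hf, momentFunctional_alternant_mul_alternant,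
    Fintype.card_fin]

theorem ensembleFunctional_one (n : ℕ) (μ : ℕ → R) :
    ensembleFunctional n μ 1 = n.factorial * (hankel n μ).det :=
  ensembleFunctional_of_alternant_eq μ (mul_one _).symm

theorem ensembleFunctional_schur_pluecker {m : ℕ} {μ : ℕ → R}
    (hμ : IsUnit (hankel (m + 2) μ).det) :
    letI e := esymm (Fin (m + 2)) R
    letI E := ensembleFunctional (m + 2) μ
    E 1 * E (e 2 ^ 2 - e 1 * e 3) - E (e 1) * E (e 1 * e 2 - e 3) + E (e 1 ^ 2 - e 2) * E (e 2) =
      0 := by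
  have hone : alternant R (twoRowExponents m 0 0) = alternant R Fin.val * 1 := by
    rw [twoRowExponents_zero_zero, mul_one]
  have hpluecker := det_twoRowExponents_pluecker (fun i k => μ (i + k)) hμ
  simp only [ensembleFunctional_of_alternant_eq μ hone,
    ensembleFunctional_of_alternant_eq μ (alternant_twoRowExponents_one_zero R m),
    ensembleFunctional_of_alternant_eq μ (alternant_twoRowExponents_two_zero R m),
    ensembleFunctional_of_alternant_eq μ (alternant_twoRowExponents_one_one R m),
    ensembleFunctional_of_alternant_eq μ (alternant_twoRowExponents_two_one R m),
    ensembleFunctional_of_alternant_eq μ (alternant_twoRowExponents_two_two R m)]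
  linear_combination ((m + 2).factorial : R) ^ 2 * hpluecker

theorem ensembleFunctional_psum_kp_add_two {m : ℕ} {μ : ℕ → R}
    (hμ : IsUnit (hankel (m + 2) μ).det) :
    letI p := psum (Fin (m + 2)) R
    letI E := ensembleFunctional (m + 2) μ
    E 1 * (E (p 1 ^ 4) + 3 * E (p 2 ^ 2) - 4 * E (p 1 * p 3)) -
      4 * E (p 1) * (E (p 1 ^ 3) - E (p 3)) +
      3 * (E (p 1 ^ 2) + E (p 2)) * (E (p 1 ^ 2) - E (p 2)) = 0 := by
  have hschur := ensembleFunctional_schur_pluecker hμ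
  set e := esymm (Fin (m + 2)) R
  set p := psum (Fin (m + 2)) R
  set E := ensembleFunctional (m + 2) μ
  have hp1 : p 1 = e 1 := esymm_one_eq_psum.symm
  have hp2 : p 2 = e 1 ^ 2 - 2 * e 2 := psum_two_eq_esymm
  have hp3 : p 3 = e 1 ^ 3 - 3 * e 1 * e 2 + 3 * e 3 := psum_three_eq_esymm
  have hquartic : p 1 ^ 4 + 3 • p 2 ^ 2 - 4 • (p 1 * p 3) = 12 • (e 2 ^ 2 - e 1 * e 3) := by
    rw [hp1, hp2, hp3]
    ring
  have hcubic : p 1 ^ 3 - p 3 = 3 • (e 1 * e 2 - e 3) := by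
    rw [hp1, hp3]
    ring
  have hsum : p 1 ^ 2 + p 2 = 2 • (e 1 ^ 2 - e 2) := by
    rw [hp1, hp2]
    ring
  have hdiff : p 1 ^ 2 - p 2 = 2 • e 2 := by
    rw [hp1, hp2]
    ring
  apply_fun E at hquartic hcubic hsum hdiff
  simp only [map_add, map_sub, map_nsmul] at hquartic hcubic hsum hdiff hschur
  simp only [nsmul_eq_mul, Nat.cast_ofNat] at hquartic hcubic hsum hdiff
  rw [hquartic, hcubic, hsum, hdiff, hp1]
  linear_combination 12 * hschur

theorem ensembleFunctional_psum_kp {n : ℕ} {μ : ℕ → R} (hμ : IsUnit (hankel n μ).det) :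
    letI p := psum (Fin n) R
    letI E := ensembleFunctional n μ
    E 1 * (E (p 1 ^ 4) + 3 * E (p 2 ^ 2) - 4 * E (p 1 * p 3)) -
      4 * E (p 1) * (E (p 1 ^ 3) - E (p 3)) +
      3 * (E (p 1 ^ 2) + E (p 2)) * (E (p 1 ^ 2) - E (p 2)) = 0 := by
  match n with
  | 0 => simp [psum]
  | 1 =>
    simp only [psum, Fin.sum_univ_one, ← pow_mul, ← pow_add, Nat.reduceMul, Nat.reduceAdd]
    ring
  | m + 2 => exact ensembleFunctional_psum_kp_add_two hμ

variable {K : Type*} [Field K] {n : ℕ} {μ : ℕ → K}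

/-- The normalised functional `f ↦ ∫ Δ² f / ∫ Δ²`; it vanishes identically if `∫ Δ² = 0`. -/
def ensembleMean (n : ℕ) (μ : ℕ → K) : MvPolynomial (Fin n) K →ₗ[K] K :=
  (ensembleFunctional n μ 1)⁻¹ • ensembleFunctional n μ

theorem ensembleMean_apply (f : MvPolynomial (Fin n) K) :
    ensembleMean n μ f = (ensembleFunctional n μ 1)⁻¹ * ensembleFunctional n μ f :=
  rfl

theorem ensembleMean_one (hμ : ensembleFunctional n μ 1 ≠ 0) : ensembleMean n μ 1 = 1 :=
  inv_mul_cancel₀ hμ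

theorem ensembleMean_psum_kp (hμ : ensembleFunctional n μ 1 ≠ 0) :
    letI p := psum (Fin n) K
    letI M := ensembleMean n μ
    M (p 1 ^ 4) + 3 * M (p 2 ^ 2) - 4 * M (p 1 * p 3) - 4 * M (p 1) * (M (p 1 ^ 3) - M (p 3)) +
      3 * (M (p 1 ^ 2) + M (p 2)) * (M (p 1 ^ 2) - M (p 2)) = 0 := by
  have hdet : (hankel n μ).det ≠ 0 := right_ne_zero_of_mul (ensembleFunctional_one n μ ▸ hμ)
  have hkp := ensembleFunctional_psum_kp hdet.isUnit
  simp only [ensembleMean_apply]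
  field_simp
  linear_combination hkp

end KP

section LoopEquations

open MvPolynomial

section Derivation

variable {R A ι : Type*} [CommRing R] [CommRing A] [Algebra R A]

theorem derivation_prod_of_eq_mul (D : Derivation R A A) {S : Finset ι} {f q : ι → A}
    (hq : ∀ i ∈ S, D (f i) = f i * q i) : D (∏ i ∈ S, f i) = (∏ i ∈ S, f i) * ∑ i ∈ S, q i := by
  classical
  induction S using Finset.induction_on with
  | empty => simp
  | insert i S hi ih =>
    rw [Finset.prod_insert hi, Finset.sum_insert hi, Derivation.leibniz,
      ih fun j hj => hq j (Finset.mem_insert_of_mem hj), hq i (Finset.mem_insert_self _ _)]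
    simp only [smul_eq_mul]
    ring

theorem two_mul_sum_sum_Ioi_of_symm {n : ℕ} {q : Fin n → Fin n → A} (hq : ∀ i j, q i j = q j i) :
    2 * ∑ i, ∑ j ∈ Finset.Ioi i, q i j = ∑ i, ∑ j, q i j - ∑ i, q i i := by
  have hoffdiag : ∑ i, ∑ j ∈ Finset.Ioi i, 2 * q i j = ∑ i, ∑ j ∈ {i}ᶜ, q i j := by
    simpa only [hq, two_mul] using Finset.sum_sum_Ioi_add_eq_sum_sum_off_diag fun i j => q j i
  simp only [Finset.mul_sum, hoffdiag, ← Finset.sum_sub_distrib]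
  refine Finset.sum_congr rfl fun i _ => ?_
  rw [eq_sub_iff_add_eq, Finset.sum_compl_add_sum {i} (q i) |>.symm, Finset.sum_singleton]

theorem two_mul_derivation_det_vandermonde {n : ℕ} (D : Derivation R A A) (v : Fin n → A)
    {q : Fin n → Fin n → A} (hsymm : ∀ i j, q i j = q j i)
    (hq : ∀ i j, D (v j) - D (v i) = (v j - v i) * q i j) :
    2 * D (Matrix.vandermonde v).det =
      (Matrix.vandermonde v).det * (∑ i, ∑ j, q i j - ∑ i, q i i) := by
  have hD : D (Matrix.vandermonde v).det =
      (Matrix.vandermonde v).det * ∑ i, ∑ j ∈ Finset.Ioi i, q i j := by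
    rw [Matrix.det_vandermonde]
    refine derivation_prod_of_eq_mul D fun i _ => derivation_prod_of_eq_mul D fun j _ => ?_
    rw [map_sub, hq]
  rw [hD, mul_left_comm, two_mul_sum_sum_Ioi_of_symm hsymm]

theorem mkDerivation_X_mul_monomial [Fintype ι] (g : ι → MvPolynomial ι R) (m : ι →₀ ℕ) (c : R) :
    mkDerivation R (fun i => X i * g i) (monomial m c) = ∑ i, m i • (g i * monomial m c) := by
  classical
  rw [mkDerivation_monomial, Finsupp.sum_fintype _ _ (by simp), Finset.smul_sum]
  refine Finset.sum_congr rfl fun i _ => ?_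
  have hpderiv : c • monomial (m - Finsupp.single i 1) (m i : R) = pderiv i (monomial m c) := by
    rw [pderiv_monomial, smul_monomial, smul_eq_mul]
  rw [smul_eq_mul, ← smul_mul_assoc, hpderiv, ← mul_assoc, mul_comm _ (X i),
    X_mul_pderiv_monomial, smul_mul_assoc, mul_comm]

end Derivation

variable {R : Type*} [CommRing R] {a b s : R} {μ : ℕ → R}

/-- The recurrence satisfied by the moments of the weight `w x = x ^ a * (1 - x) ^ b * exp (-s * x)`
on `[0, 1]`; it expresses that the derivative of `x ^ (m + 1) * (1 - x) * w x`
integrates to zero. -/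
def PearsonRecurrence (a b s : R) (μ : ℕ → R) : Prop :=
  ∀ m : ℕ, (m + 1 + a) * μ m - (m + 2 + a + b + s) * μ (m + 1) + s * μ (m + 2) = 0

/-- The vector field `∑ i, X i ^ (k + 1) * (1 - X i) * ∂ i`, along which integration by parts
against the weight of `PearsonRecurrence` produces no boundary terms. -/
def loopDerivation (ι R : Type*) [CommRing R] (k : ℕ) :
    Derivation R (MvPolynomial ι R) (MvPolynomial ι R) :=
  mkDerivation R fun i => X i * (X i ^ k - X i ^ (k + 1))

section

variable {ι : Type*}

theorem loopDerivation_X (k : ℕ) (i : ι) :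
    loopDerivation ι R k (X i) = X i * (X i ^ k - X i ^ (k + 1)) :=
  mkDerivation_X _ _ _

variable [Fintype ι]

theorem loopDerivation_psum (k m : ℕ) :
    loopDerivation ι R k (psum ι R (m + 1)) =
      (m + 1) • (psum ι R (m + k + 1) - psum ι R (m + k + 2)) := by
  simp only [psum, map_sum, Derivation.leibniz_pow, loopDerivation_X, ← Finset.sum_sub_distrib,
    Finset.smul_sum, smul_eq_mul, Nat.add_sub_cancel]
  refine Finset.sum_congr rfl fun i _ => ?_
  ring

theorem momentFunctional_loopDerivation (hμ : PearsonRecurrence a b s μ) (k : ℕ)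
    (f : MvPolynomial ι R) :
    letI p := psum ι R
    letI L := momentFunctional ι μ
    L (loopDerivation ι R k f) + (k + 1 + a) * L (p k * f) -
      (k + 2 + a + b + s) * L (p (k + 1) * f) + s * L (p (k + 2) * f) = 0 := by
  classical
  induction f using MvPolynomial.induction_on' with
  | add f g hf hg =>
    simp only [mul_add, map_add]
    linear_combination hf + hg
  | monomial m c =>
    simp only [loopDerivation, mkDerivation_X_mul_monomial, psum, Finset.sum_mul, sub_mul, map_sum,
      map_nsmul, map_sub, momentFunctional_X_pow_mul_monomial, Finset.mul_sum,
      ← Finset.sum_add_distrib, ← Finset.sum_sub_distrib]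
    refine Finset.sum_eq_zero fun i _ => ?_
    have hi := hμ (m i + k)
    simp only [nsmul_eq_mul, Nat.cast_add, ← add_assoc] at hi ⊢
    linear_combination (c * ∏ j ∈ Finset.univ.erase i, μ (m j)) * hi

end

variable {n : ℕ}

theorem two_mul_loopDerivation_zero_alternant :
    letI p := psum (Fin n) R
    2 * loopDerivation (Fin n) R 0 (alternant R Fin.val) =
      alternant R Fin.val * ((n * (n - 1) : R) • 1 - (2 * (n - 1) : R) • p 1) := by
  have hvandermonde := two_mul_derivation_det_vandermonde (loopDerivation (Fin n) R 0) X
    (q := fun i j => 1 - (X i + X j)) (fun i j => by ring)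
    fun i j => by simp only [loopDerivation_X]; ring
  refine hvandermonde.trans ?_
  simp only [alternant, Matrix.vandermonde, psum, pow_one, Finset.sum_sub_distrib,
    Finset.sum_add_distrib, Finset.sum_const, Finset.card_univ, Fintype.card_fin, nsmul_eq_mul,
    ← Finset.mul_sum, smul_eq_C_mul, map_mul, map_sub, map_natCast, map_one, map_ofNat]
  ring

theorem two_mul_loopDerivation_one_alternant :
    letI p := psum (Fin n) R
    2 * loopDerivation (Fin n) R 1 (alternant R Fin.val) =
      alternant R Fin.val *
        ((2 * (n - 1) : R) • p 1 - (2 * (n - 1) : R) • p 2 - p 1 ^ 2 + p 2) := by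
  have hvandermonde := two_mul_derivation_det_vandermonde (loopDerivation (Fin n) R 1) X
    (q := fun i j => (X i + X j) - (X i ^ 2 + X j ^ 2 + X i * X j)) (fun i j => by ring)
    fun i j => by simp only [loopDerivation_X]; ring
  refine hvandermonde.trans ?_
  simp only [alternant, Matrix.vandermonde, psum, pow_one, Finset.sum_sub_distrib,
    Finset.sum_add_distrib, Finset.sum_const, Finset.card_univ, Fintype.card_fin, nsmul_eq_mul,
    ← Finset.mul_sum, ← Finset.sum_mul, ← pow_two, smul_eq_C_mul, map_mul, map_sub, map_natCast,
    map_one, map_ofNat]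
  ring

theorem ensembleFunctional_loopDerivation (hμ : PearsonRecurrence a b s μ) {k : ℕ}
    {r : MvPolynomial (Fin n) R}
    (hr : 2 * loopDerivation (Fin n) R k (alternant R Fin.val) = alternant R Fin.val * r)
    (f : MvPolynomial (Fin n) R) :
    letI p := psum (Fin n) R
    letI E := ensembleFunctional n μ
    E (loopDerivation (Fin n) R k f) + E (r * f) + (k + 1 + a) * E (p k * f) -
      (k + 2 + a + b + s) * E (p (k + 1) * f) + s * E (p (k + 2) * f) = 0 := by
  set Δ := alternant R (Fin.val : Fin n → ℕ) with hΔ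
  have hleibniz : loopDerivation (Fin n) R k (Δ ^ 2 * f) =
      Δ ^ 2 * loopDerivation (Fin n) R k f + Δ ^ 2 * (r * f) := by
    simp only [Derivation.leibniz, Derivation.leibniz_pow, smul_eq_mul, nsmul_eq_mul,
      Nat.cast_ofNat]
    linear_combination f * Δ * hr
  have hparts := momentFunctional_loopDerivation hμ k (Δ ^ 2 * f)
  simp only [hleibniz, map_add, mul_left_comm _ (Δ ^ 2)] at hparts
  simpa only [ensembleFunctional_apply, ← hΔ] using hparts

theorem ensembleFunctional_loop_zero (hμ : PearsonRecurrence a b s μ)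
    (f : MvPolynomial (Fin n) R) :
    letI p := psum (Fin n) R
    letI E := ensembleFunctional n μ
    E (loopDerivation (Fin n) R 0 f) + n * (n + a) * E f - (2 * n + a + b + s) * E (p 1 * f) +
      s * E (p 2 * f) = 0 := by
  have h := ensembleFunctional_loopDerivation hμ two_mul_loopDerivation_zero_alternant f
  have hzero : psum (Fin n) R 0 = (n : R) • 1 := by
    rw [psum_zero, Fintype.card_fin, smul_eq_C_mul, map_natCast, mul_one]
  simp only [hzero, sub_mul, smul_mul_assoc, one_mul, map_sub, map_smul, smul_eq_mul,
    Nat.cast_zero, zero_add] at h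
  linear_combination h

theorem ensembleFunctional_loop_one (hμ : PearsonRecurrence a b s μ)
    (f : MvPolynomial (Fin n) R) :
    letI p := psum (Fin n) R
    letI E := ensembleFunctional n μ
    E (loopDerivation (Fin n) R 1 f) + (2 * n + a) * E (p 1 * f) -
      (2 * n + a + b + s) * E (p 2 * f) - E (p 1 ^ 2 * f) + s * E (p 3 * f) = 0 := by
  have h := ensembleFunctional_loopDerivation hμ two_mul_loopDerivation_one_alternant f
  simp only [add_mul, sub_mul, smul_mul_assoc, map_add, map_sub, map_smul, smul_eq_mul,
    Nat.cast_one, Nat.reduceAdd] at h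
  linear_combination h

section Mean

variable {K : Type*} [Field K] {a b s : K} {μ : ℕ → K}

theorem ensembleMean_loop_zero (hμ : PearsonRecurrence a b s μ) (f : MvPolynomial (Fin n) K) :
    letI p := psum (Fin n) K
    letI M := ensembleMean n μ
    s * M (p 2 * f) = (2 * n + a + b + s) * M (p 1 * f) - n * (n + a) * M f -
      M (loopDerivation (Fin n) K 0 f) := by
  simp only [ensembleMean_apply]
  linear_combination (ensembleFunctional n μ 1)⁻¹ * ensembleFunctional_loop_zero hμ f

theorem ensembleMean_loop_one (hμ : PearsonRecurrence a b s μ) (f : MvPolynomial (Fin n) K) :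
    letI p := psum (Fin n) K
    letI M := ensembleMean n μ
    s * M (p 3 * f) = (2 * n + a + b + s) * M (p 2 * f) - (2 * n + a) * M (p 1 * f) +
      M (p 1 ^ 2 * f) - M (loopDerivation (Fin n) K 1 f) := by
  simp only [ensembleMean_apply]
  linear_combination (ensembleFunctional n μ 1)⁻¹ * ensembleFunctional_loop_one hμ f

theorem ensembleMean_psum_two (hμ : PearsonRecurrence a b s μ)
    (hne : ensembleFunctional n μ 1 ≠ 0) :
    letI p := psum (Fin n) K
    letI M := ensembleMean n μ
    s * M (p 2) = (2 * n + a + b + s) * M (p 1) - n * (n + a) := by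
  simpa only [mul_one, ensembleMean_one hne, Derivation.map_one_eq_zero, map_zero, sub_zero]
    using ensembleMean_loop_zero (n := n) hμ 1

theorem ensembleMean_psum_one_mul_psum_two (hμ : PearsonRecurrence a b s μ) :
    letI p := psum (Fin n) K
    letI M := ensembleMean n μ
    s * M (p 1 * p 2) =
      (2 * n + a + b + s) * M (p 1 ^ 2) - n * (n + a) * M (p 1) - (M (p 1) - M (p 2)) := by
  simpa only [loopDerivation_psum, mul_comm (psum _ _ 2), sq, zero_add, one_smul, map_sub]
    using ensembleMean_loop_zero hμ (psum (Fin n) K 1)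

theorem ensembleMean_psum_two_sq (hμ : PearsonRecurrence a b s μ) :
    letI p := psum (Fin n) K
    letI M := ensembleMean n μ
    s * M (p 2 ^ 2) =
      (2 * n + a + b + s) * M (p 1 * p 2) - n * (n + a) * M (p 2) - 2 * (M (p 2) - M (p 3)) := by
  simpa only [loopDerivation_psum, Nat.reduceAdd, sq, two_smul, two_mul, map_add, map_sub]
    using ensembleMean_loop_zero hμ (psum (Fin n) K 2)

theorem ensembleMean_psum_three (hμ : PearsonRecurrence a b s μ) :
    letI p := psum (Fin n) K
    letI M := ensembleMean n μ
    s * M (p 3) = (2 * n + a + b + s) * M (p 2) - (2 * n + a) * M (p 1) + M (p 1 ^ 2) := by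
  simpa only [mul_one, Derivation.map_one_eq_zero, map_zero, sub_zero]
    using ensembleMean_loop_one (n := n) hμ 1

theorem ensembleMean_psum_one_mul_psum_three (hμ : PearsonRecurrence a b s μ) :
    letI p := psum (Fin n) K
    letI M := ensembleMean n μ
    s * M (p 1 * p 3) = (2 * n + a + b + s) * M (p 1 * p 2) - (2 * n + a) * M (p 1 ^ 2) +
      M (p 1 ^ 3) - (M (p 2) - M (p 3)) := by
  simpa only [loopDerivation_psum, mul_comm _ (psum (Fin n) K 1), ← pow_succ', ← sq, zero_add,
    one_smul, map_sub] using ensembleMean_loop_one hμ (psum (Fin n) K 1)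

end Mean

end LoopEquations

section Cumulants

open MvPolynomial

/-- The second cumulant of a distribution with moments `m`. -/
def secondCumulant {K : Type*} [Ring K] (m : ℕ → K) : K :=
  m 2 - m 1 ^ 2

/-- The third cumulant of a distribution with moments `m`. -/
def thirdCumulant {K : Type*} [Ring K] (m : ℕ → K) : K :=
  m 3 - 3 * m 1 * m 2 + 2 * m 1 ^ 3

/-- The fourth cumulant of a distribution with moments `m`. -/
def fourthCumulant {K : Type*} [Ring K] (m : ℕ → K) : K :=
  m 4 - 4 * m 3 * m 1 - 3 * m 2 ^ 2 + 12 * m 2 * m 1 ^ 2 - 6 * m 1 ^ 4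

/-- The moments of the linear statistic `∑ i, X i` under `ensembleMean`. -/
def traceMoment {K : Type*} [Field K] (n : ℕ) (μ : ℕ → K) (j : ℕ) : K :=
  ensembleMean n μ (psum (Fin n) K 1 ^ j)

theorem traceMoment_painleve {K : Type*} [Field K] {n : ℕ} {μ : ℕ → K} {a b s : K} (hs : s ≠ 0)
    (hμ : PearsonRecurrence a b s μ) (hne : ensembleFunctional n μ 1 ≠ 0) :
    letI m := traceMoment n μ
    letI k₀ := n ^ 2 + n * (a + b) - s * m 1
    letI k₁ := -m 1 + s * secondCumulant m
    letI k₂ := 2 * secondCumulant m - s * thirdCumulant m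
    letI k₃ := -3 * thirdCumulant m + s * fourthCumulant m
    k₃ + k₂ / s + (6 / s) * k₁ ^ 2 - (4 / s ^ 2) * k₀ * k₁ -
      (s ^ 2 - 2 * s * (2 * n + a - b) + (a + b) ^ 2) * k₁ / s ^ 2 +
      (s - 2 * n - a + b) * k₀ / s ^ 2 - (b * n / s ^ 2) * (s + a + b) = 0 := by
  have hp₂ := ensembleMean_psum_two hμ hne
  have hp₁p₂ := ensembleMean_psum_one_mul_psum_two (n := n) hμ
  have hp₂p₂ := ensembleMean_psum_two_sq (n := n) hμ
  have hp₃ := ensembleMean_psum_three (n := n) hμ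
  have hp₁p₃ := ensembleMean_psum_one_mul_psum_three (n := n) hμ
  have hkp := ensembleMean_psum_kp hne
  simp only [traceMoment, secondCumulant, thirdCumulant, fourthCumulant, pow_one]
  set m₁ := ensembleMean n μ (psum (Fin n) K 1)
  set m₂ := ensembleMean n μ (psum (Fin n) K 2)
  set w := 2 * n + a + b + s with hw
  -- The loop equations eliminate from the KP relation every mean other than the `traceMoment`s.
  linear_combination (norm := (rw [hw]; field_simp; ring)) s * hkp - 3 * hp₂p₂ + 4 * hp₁p₃ -
    (4 * m₁ + 2 / s) * hp₃ + w / s * hp₁p₂ +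
    (3 * m₂ - (m₁ * w + w / s - 2) / s) * hp₂

end Cumulants

section ProductIntegrals

open MvPolynomial

variable {ι : Type*} [Fintype ι] {ν : Measure ℝ} {w : ℝ → ℝ}

theorem eval_monomial_mul_prod (m : ι →₀ ℕ) (c : ℝ) (w : ℝ → ℝ) (z : ι → ℝ) :
    eval z (monomial m c) * ∏ i, w (z i) = c * ∏ i, z i ^ m i * w (z i) := by
  rw [eval_monomial, Finsupp.prod_fintype _ _ fun i => pow_zero _, mul_assoc,
    ← Finset.prod_mul_distrib]

variable [SigmaFinite ν]

theorem integrable_eval_mul_prod (hw : ∀ k : ℕ, Integrable (fun x => x ^ k * w x) ν)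
    (f : MvPolynomial ι ℝ) :
    Integrable (fun z => eval z f * ∏ i, w (z i)) (Measure.pi fun _ : ι => ν) := by
  induction f using MvPolynomial.induction_on' with
  | add p q hp hq => simpa only [map_add, add_mul] using! hp.add hq
  | monomial m c =>
    simp only [eval_monomial_mul_prod]
    exact (Integrable.fintype_prod fun i => hw (m i)).const_mul c

theorem integral_eval_mul_prod (hw : ∀ k : ℕ, Integrable (fun x => x ^ k * w x) ν)
    (f : MvPolynomial ι ℝ) :
    ∫ z, eval z f * ∏ i, w (z i) ∂Measure.pi (fun _ => ν) =
      momentFunctional ι (fun k => ∫ x, x ^ k * w x ∂ν) f := by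
  induction f using MvPolynomial.induction_on' with
  | add p q hp hq =>
    simp only [map_add, add_mul]
    rw [integral_add (integrable_eval_mul_prod hw p) (integrable_eval_mul_prod hw q), hp, hq]
  | monomial m c =>
    simp only [eval_monomial_mul_prod]
    rw [integral_const_mul, integral_fintype_prod_eq_prod (f := fun i x => x ^ m i * w x),
      momentFunctional_monomial]

end ProductIntegrals

section HankelDeterminants

open Polynomial Matrix

variable {ν : Measure ℝ} {w : ℝ → ℝ}

theorem eval_ofFn_sq_mul {n : ℕ} (v : Fin n → ℝ) (w : ℝ → ℝ) (x : ℝ) :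
    (ofFn n v).eval x ^ 2 * w x = ∑ i, ∑ j, v i * v j * (x ^ (i + j : ℕ) * w x) := by
  rw [ofFn_eq_sum_monomial, eval_finsetSum, sq, Finset.sum_mul_sum, Finset.sum_mul]
  simp only [eval_monomial, Finset.sum_mul, pow_add]
  exact Finset.sum_congr rfl fun i _ => Finset.sum_congr rfl fun j _ => by ring

theorem integrable_eval_ofFn_sq_mul (hw : ∀ k : ℕ, Integrable (fun x => x ^ k * w x) ν) {n : ℕ}
    (v : Fin n → ℝ) : Integrable (fun x => (ofFn n v).eval x ^ 2 * w x) ν := by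
  simp only [eval_ofFn_sq_mul]
  exact integrable_finsetSum _ fun i _ => integrable_finsetSum _ fun j _ => (hw _).const_mul _

theorem integral_eval_ofFn_sq_mul (hw : ∀ k : ℕ, Integrable (fun x => x ^ k * w x) ν) {n : ℕ}
    (v : Fin n → ℝ) :
    ∫ x, (ofFn n v).eval x ^ 2 * w x ∂ν =
      v ⬝ᵥ (hankel n fun k => ∫ x, x ^ k * w x ∂ν) *ᵥ v := by
  have hterm (i j : Fin n) : Integrable (fun x => v i * v j * (x ^ (i + j : ℕ) * w x)) ν :=
    (hw _).const_mul _
  simp only [eval_ofFn_sq_mul, dotProduct, mulVec, hankel, of_apply, Finset.mul_sum]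
  rw [integral_finsetSum _ fun i _ => integrable_finsetSum _ fun j _ => hterm i j]
  refine Finset.sum_congr rfl fun i _ => ?_
  rw [integral_finsetSum _ fun j _ => hterm i j]
  refine Finset.sum_congr rfl fun j _ => ?_
  rw [integral_const_mul]
  ring

theorem ae_eval_ne_zero [NullSingletonClass ν] {q : ℝ[X]} (hq : q ≠ 0) :
    ∀ᵐ x ∂ν, q.eval x ≠ 0 := by
  have hroots : ν {x | q.IsRoot x} = 0 := (finite_setOfPred_isRoot hq).measure_zero ν
  simpa [ae_iff] using hroots

theorem det_hankel_ne_zero [NullSingletonClass ν] [NeZero ν] (hpos : ∀ x, 0 < w x)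
    (hw : ∀ k : ℕ, Integrable (fun x => x ^ k * w x) ν) (n : ℕ) :
    (hankel n fun k => ∫ x, x ^ k * w x ∂ν).det ≠ 0 := by
  intro hdet
  obtain ⟨v, hv, hkernel⟩ := exists_mulVec_eq_zero_iff.2 hdet
  have hform := integral_eval_ofFn_sq_mul hw v
  rw [hkernel, dotProduct_zero, integral_eq_zero_iff_of_nonneg
    (fun x => mul_nonneg (sq_nonneg _) (hpos x).le) (integrable_eval_ofFn_sq_mul hw v)] at hform
  have hne : ofFn n v ≠ 0 := fun h => hv (injective_ofFn n (by simpa using h))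
  obtain ⟨x, hzero, hx⟩ := (hform.and (ae_eval_ne_zero hne)).exists
  exact mul_ne_zero (pow_ne_zero 2 hx) (hpos x).ne' hzero

theorem det_hankel_mul_pow_mul {R : Type*} [CommRing R] (n : ℕ) (c r : R) (μ : ℕ → R) :
    (hankel n fun k => c * r ^ k * μ k).det =
      c ^ n * r ^ (n * (n - 1)) * (hankel n μ).det := by
  have hfactor : hankel n (fun k => c * r ^ k * μ k) =
      of fun i j : Fin n =>
        c * r ^ (i : ℕ) * of (fun i j : Fin n => r ^ (j : ℕ) * hankel n μ i j) i j := by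
    ext i j
    simp only [hankel, of_apply, pow_add]
    ring
  rw [hfactor, det_mul_column, det_mul_row, Finset.prod_mul_distrib, Finset.prod_pow_eq_pow_sum,
    Fin.sum_univ_eq_sum_range (fun i => i), Finset.prod_const, Finset.card_univ, Fintype.card_fin,
    ← Finset.sum_range_id_mul_two]
  ring

theorem ensembleFunctional_one_ne_zero [NullSingletonClass ν] [NeZero ν] (hpos : ∀ x, 0 < w x)
    (hw : ∀ k : ℕ, Integrable (fun x => x ^ k * w x) ν) (n : ℕ) :
    ensembleFunctional n (fun k => ∫ x, x ^ k * w x ∂ν) 1 ≠ 0 := by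
  rw [ensembleFunctional_one]
  exact mul_ne_zero (Nat.cast_ne_zero.2 n.factorial_ne_zero) (det_hankel_ne_zero hpos hw n)

theorem ensembleFunctional_mul_pow_mul_one {R : Type*} [CommRing R] (n : ℕ) (c r : R) (μ : ℕ → R) :
    ensembleFunctional n (fun k => c * r ^ k * μ k) 1 =
      c ^ n * r ^ (n * (n - 1)) * ensembleFunctional n μ 1 := by
  rw [ensembleFunctional_one, ensembleFunctional_one, det_hankel_mul_pow_mul]
  ring

end HankelDeterminants

section BetaMeasure

open ProbabilityTheory

variable {α β : ℝ}

theorem measurable_betaPDF (α β : ℝ) : Measurable (betaPDF α β) :=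
  (measurable_betaPDFReal α β).ennreal_ofReal

theorem betaPDF_eq_zero_of_notMem_Ioo {x : ℝ} (hx : x ∉ Set.Ioo 0 1) : betaPDF α β x = 0 := by
  rw [betaPDF_eq, if_neg (by exact hx), ENNReal.ofReal_zero]

theorem ae_mem_Ioo_betaMeasure (α β : ℝ) : ∀ᵐ x ∂betaMeasure α β, x ∈ Set.Ioo 0 1 :=
  (ae_withDensity_iff (measurable_betaPDF α β)).2 <|
    ae_of_all _ fun _ hx => not_imp_comm.1 betaPDF_eq_zero_of_notMem_Ioo hx

theorem toReal_betaPDF_smul (hα : 0 < α) (hβ : 0 < β) (g : ℝ → ℝ) (x : ℝ) :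
    (betaPDF α β x).toReal • g x =
      (Set.Ioo 0 1).indicator
        (fun y => (beta α β)⁻¹ * (y ^ (α - 1) * (1 - y) ^ (β - 1) * g y)) x := by
  by_cases hx : x ∈ Set.Ioo 0 1
  · rw [betaPDF, ENNReal.toReal_ofReal (betaPDFReal_pos hx.1 hx.2 hα hβ).le, betaPDFReal,
      if_pos ⟨hx.1, hx.2⟩, Set.indicator_of_mem hx, smul_eq_mul]
    ring
  · rw [betaPDF_eq_zero_of_notMem_Ioo hx, Set.indicator_of_notMem hx, ENNReal.toReal_zero,
      zero_smul]

theorem integral_betaMeasure (hα : 0 < α) (hβ : 0 < β) (g : ℝ → ℝ) :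
    ∫ x, g x ∂betaMeasure α β =
      (beta α β)⁻¹ * ∫ x in Set.Ioo 0 1, x ^ (α - 1) * (1 - x) ^ (β - 1) * g x := by
  rw [betaMeasure, integral_withDensity_eq_integral_toReal_smul (measurable_betaPDF α β)
    (ae_of_all _ fun x => by exact ENNReal.ofReal_lt_top)]
  simp only [toReal_betaPDF_smul hα hβ]
  rw [integral_indicator measurableSet_Ioo, integral_const_mul]

theorem integrable_betaMeasure_iff (hα : 0 < α) (hβ : 0 < β) {g : ℝ → ℝ} :
    Integrable g (betaMeasure α β) ↔
      IntegrableOn (fun x => x ^ (α - 1) * (1 - x) ^ (β - 1) * g x) (Set.Ioo 0 1) := by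
  rw [betaMeasure, integrable_withDensity_iff_integrable_smul' (measurable_betaPDF α β)
    (ae_of_all _ fun x => by exact ENNReal.ofReal_lt_top)]
  simp only [toReal_betaPDF_smul hα hβ]
  rw [integrable_indicator_iff measurableSet_Ioo, IntegrableOn,
    integrable_const_mul_iff (inv_ne_zero (beta_pos hα hβ).ne').isUnit, IntegrableOn]

theorem integrableExpSet_id_betaMeasure (hα : 0 < α) (hβ : 0 < β) :
    integrableExpSet id (betaMeasure α β) = Set.univ := by
  have := isProbabilityMeasureBeta hα hβ
  exact Set.eq_univ_of_forall fun t => integrable_exp_mul_of_mem_Icc aemeasurable_id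
    ((ae_mem_Ioo_betaMeasure α β).mono fun x hx => Set.Ioo_subset_Icc_self hx)

end BetaMeasure

section TiltedBetaMoments

open ProbabilityTheory

/-- The moments `∫ x ^ k * exp (-s * x)` against the beta distribution with density proportional to
`x ^ a * (1 - x) ^ b` on `(0, 1)`. -/
def tiltedBetaMoment (a b s : ℝ) (k : ℕ) : ℝ :=
  ∫ x, x ^ k * exp (-s * x) ∂betaMeasure (a + 1) (b + 1)

/-- The weight `x ^ a * (1 - x) ^ b * exp (-s * x)`, which carries the matrix integral after
rescaling `[0, s]` to `[0, 1]`. -/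
def tiltedBetaWeight (a b s x : ℝ) : ℝ :=
  x ^ a * (1 - x) ^ b * exp (-s * x)

variable {a b : ℝ}

theorem integrable_pow_mul_exp_betaMeasure (ha : -1 < a) (hb : -1 < b) (s : ℝ) (k : ℕ) :
    Integrable (fun x => x ^ k * exp (-s * x)) (betaMeasure (a + 1) (b + 1)) :=
  integrable_pow_mul_exp_of_mem_interior_integrableExpSet (X := id) (v := -s) (by
    simp [integrableExpSet_id_betaMeasure (neg_lt_iff_pos_add.1 ha) (neg_lt_iff_pos_add.1 hb)]) k

theorem hasDerivAt_tiltedBetaMoment (ha : -1 < a) (hb : -1 < b) (s : ℝ) (k : ℕ) :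
    HasDerivAt (fun t => tiltedBetaMoment a b t k) (-tiltedBetaMoment a b s (k + 1)) s := by
  have hmem : -s ∈ interior (integrableExpSet id (betaMeasure (a + 1) (b + 1))) := by
    simp [integrableExpSet_id_betaMeasure (neg_lt_iff_pos_add.1 ha) (neg_lt_iff_pos_add.1 hb)]
  exact ((hasDerivAt_integral_pow_mul_exp_real hmem k).comp s (hasDerivAt_neg s)).congr_deriv
    (mul_neg_one _)

theorem ensembleFunctional_tiltedBetaMoment_one_ne_zero (ha : -1 < a) (hb : -1 < b) (n : ℕ)
    (s : ℝ) : ensembleFunctional n (tiltedBetaMoment a b s) 1 ≠ 0 := by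
  have := isProbabilityMeasureBeta (neg_lt_iff_pos_add.1 ha) (neg_lt_iff_pos_add.1 hb)
  have : NullSingletonClass (betaMeasure (a + 1) (b + 1)) := nullSingletonClass_withDensity _
  exact ensembleFunctional_one_ne_zero (fun x => exp_pos _)
    (integrable_pow_mul_exp_betaMeasure ha hb s) n

theorem integrableOn_pow_mul_tiltedBetaWeight (ha : -1 < a) (hb : -1 < b) (s : ℝ) (k : ℕ) :
    IntegrableOn (fun x => x ^ k * tiltedBetaWeight a b s x) (Set.Ioo 0 1) := by
  have h := (integrable_betaMeasure_iff (neg_lt_iff_pos_add.1 ha) (neg_lt_iff_pos_add.1 hb)).1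
    (integrable_pow_mul_exp_betaMeasure ha hb s k)
  simp only [add_sub_cancel_right] at h
  exact h.congr_fun (fun x _ => by rw [tiltedBetaWeight]; ring) measurableSet_Ioo

theorem integral_pow_mul_tiltedBetaWeight (ha : -1 < a) (hb : -1 < b) (s : ℝ) (k : ℕ) :
    ∫ x in Set.Ioo 0 1, x ^ k * tiltedBetaWeight a b s x =
      beta (a + 1) (b + 1) * tiltedBetaMoment a b s k := by
  have hα := neg_lt_iff_pos_add.1 ha
  have hβ := neg_lt_iff_pos_add.1 hb
  rw [tiltedBetaMoment, integral_betaMeasure hα hβ, mul_inv_cancel_left₀ (beta_pos hα hβ).ne']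
  simp only [add_sub_cancel_right]
  exact integral_congr_ae (ae_of_all _ fun x => by simp only [tiltedBetaWeight]; ring)

theorem hasDerivAt_tiltedBetaWeight_add_one (a b s : ℝ) {x : ℝ} (hx : x ∈ Set.Ioo 0 1) :
    HasDerivAt (tiltedBetaWeight (a + 1) (b + 1) s)
      ((a + 1) * (x ^ 0 * tiltedBetaWeight a b s x) -
        (a + b + 2 + s) * (x ^ 1 * tiltedBetaWeight a b s x) +
        s * (x ^ 2 * tiltedBetaWeight a b s x)) x := by
  have hx₀ : x ≠ 0 := hx.1.ne'
  have hx₁ : 1 - x ≠ 0 := (sub_pos.2 hx.2).ne'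
  have hleft : HasDerivAt (fun x : ℝ => x ^ (a + 1)) ((a + 1) * x ^ (a + 1 - 1)) x :=
    hasDerivAt_rpow_const (Or.inl hx₀)
  have hright : HasDerivAt (fun x : ℝ => (1 - x) ^ (b + 1))
      (-1 * (b + 1) * (1 - x) ^ (b + 1 - 1)) x :=
    ((hasDerivAt_id x).const_sub 1).rpow_const (Or.inl hx₁)
  have hexp : HasDerivAt (fun x => exp (-s * x)) (exp (-s * x) * (-s * 1)) x :=
    ((hasDerivAt_id x).const_mul (-s)).exp
  refine ((hleft.fun_mul hright).fun_mul hexp).congr_deriv ?_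
  rw [add_sub_cancel_right, add_sub_cancel_right, rpow_add_one hx₀, rpow_add_one hx₁,
    tiltedBetaWeight]
  ring

theorem continuous_tiltedBetaWeight (ha : 0 ≤ a) (hb : 0 ≤ b) (s : ℝ) :
    Continuous (tiltedBetaWeight a b s) :=
  ((continuous_id.rpow_const fun _ => Or.inr ha).mul
    ((continuous_const.sub continuous_id).rpow_const fun _ => Or.inr hb)).mul (by fun_prop)

theorem tiltedBetaMoment_add (ha : -1 < a) (hb : -1 < b) (s : ℝ) (m k : ℕ) :
    beta (a + m + 1) (b + 1) * tiltedBetaMoment (a + m) b s k =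
      beta (a + 1) (b + 1) * tiltedBetaMoment a b s (m + k) := by
  have ham : -1 < a + m := by linarith [m.cast_nonneg (α := ℝ)]
  rw [← integral_pow_mul_tiltedBetaWeight ham hb, ← integral_pow_mul_tiltedBetaWeight ha hb]
  refine setIntegral_congr_fun measurableSet_Ioo fun x hx => ?_
  simp only [tiltedBetaWeight, rpow_add_natCast hx.1.ne', pow_add]
  ring

theorem tiltedBetaMoment_zero_one_two (ha : -1 < a) (hb : -1 < b) (s : ℝ) :
    (a + 1) * tiltedBetaMoment a b s 0 - (a + b + 2 + s) * tiltedBetaMoment a b s 1 +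
      s * tiltedBetaMoment a b s 2 = 0 := by
  have hα := neg_lt_iff_pos_add.1 ha
  have hβ := neg_lt_iff_pos_add.1 hb
  have hint₀ := (integrableOn_pow_mul_tiltedBetaWeight ha hb s 0).const_mul (a + 1)
  have hint₁ := (integrableOn_pow_mul_tiltedBetaWeight ha hb s 1).const_mul (a + b + 2 + s)
  have hint₂ := (integrableOn_pow_mul_tiltedBetaWeight ha hb s 2).const_mul s
  have hint₀₁ : Integrable (fun x => (a + 1) * (x ^ 0 * tiltedBetaWeight a b s x) -
      (a + b + 2 + s) * (x ^ 1 * tiltedBetaWeight a b s x)) (volume.restrict (Set.Ioo 0 1)) :=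
    hint₀.sub hint₁
  have hftc := intervalIntegral.integral_eq_sub_of_hasDerivAt_of_le zero_le_one
    (continuous_tiltedBetaWeight hα.le hβ.le s).continuousOn
    (fun x hx => hasDerivAt_tiltedBetaWeight_add_one a b s hx)
    ((intervalIntegrable_iff_integrableOn_Ioo_of_le zero_le_one).2 (hint₀₁.add hint₂))
  rw [intervalIntegral.integral_of_le zero_le_one, integral_Ioc_eq_integral_Ioo,
    integral_add hint₀₁ hint₂, integral_sub hint₀ hint₁] at hftc
  simp only [integral_const_mul, integral_pow_mul_tiltedBetaWeight ha hb] at hftc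
  have hboundary : tiltedBetaWeight (a + 1) (b + 1) s 1 = 0 ∧
      tiltedBetaWeight (a + 1) (b + 1) s 0 = 0 := by
    simp [tiltedBetaWeight, zero_rpow hα.ne', zero_rpow hβ.ne']
  rw [hboundary.1, hboundary.2] at hftc
  refine (mul_eq_zero_iff_left (beta_pos hα hβ).ne').1 ?_
  linear_combination hftc

theorem pearsonRecurrence_tiltedBetaMoment (ha : -1 < a) (hb : -1 < b) (s : ℝ) :
    PearsonRecurrence a b s (tiltedBetaMoment a b s) := by
  intro m
  have ham : -1 < a + m := by linarith [m.cast_nonneg (α := ℝ)]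
  have hshift := tiltedBetaMoment_add ha hb s m
  have hzero := tiltedBetaMoment_zero_one_two ham hb s
  refine (mul_eq_zero_iff_left
    (beta_pos (neg_lt_iff_pos_add.1 ha) (neg_lt_iff_pos_add.1 hb)).ne').1 ?_
  linear_combination beta (a + m + 1) (b + 1) * hzero - (m + 1 + a) * hshift 0 +
    (m + 2 + a + b + s) * hshift 1 - s * hshift 2

end TiltedBetaMoments

section MatrixIntegral

open MvPolynomial ProbabilityTheory

variable {a b s : ℝ}

theorem pow_mul_weight_comp_mul_left (hs : 0 < s) (k : ℕ) {x : ℝ} (hx : x ∈ Set.Ioo 0 1) :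
    (s * x) ^ k * ((s - s * x) ^ b * (s * x) ^ a * exp (-(s * x))) =
      s ^ (a + b) * s ^ k * (x ^ k * tiltedBetaWeight a b s x) := by
  rw [← mul_one_sub, mul_rpow hs.le (sub_pos.2 hx.2).le, mul_rpow hs.le hx.1.le, mul_pow,
    rpow_add hs, tiltedBetaWeight, neg_mul]
  ring

theorem integrableOn_pow_mul_weight (ha : -1 < a) (hb : -1 < b) (hs : 0 < s) (k : ℕ) :
    IntegrableOn (fun z => z ^ k * ((s - z) ^ b * z ^ a * exp (-z))) (Set.Icc 0 s) := by
  rw [← intervalIntegrable_iff_integrableOn_Icc_of_le hs.le,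
    ← IntervalIntegrable.comp_mul_left_iff hs.ne', zero_div, div_self hs.ne',
    intervalIntegrable_iff_integrableOn_Ioo_of_le zero_le_one]
  exact IntegrableOn.congr_fun
    ((integrableOn_pow_mul_tiltedBetaWeight ha hb s k).const_mul (s ^ (a + b) * s ^ k))
    (fun x hx => (pow_mul_weight_comp_mul_left hs k hx).symm) measurableSet_Ioo

theorem integral_pow_mul_weight (ha : -1 < a) (hb : -1 < b) (hs : 0 < s) (k : ℕ) :
    ∫ z in Set.Icc 0 s, z ^ k * ((s - z) ^ b * z ^ a * exp (-z)) =
      s ^ (a + b + 1) * beta (a + 1) (b + 1) * s ^ k * tiltedBetaMoment a b s k := by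
  have hscale := intervalIntegral.mul_integral_comp_mul_left (a := 0) (b := 1)
    (f := fun z : ℝ => z ^ k * ((s - z) ^ b * z ^ a * exp (-z))) s
  rw [mul_zero, mul_one, intervalIntegral.integral_of_le hs.le,
    intervalIntegral.integral_of_le zero_le_one, integral_Ioc_eq_integral_Ioo,
    ← integral_Icc_eq_integral_Ioc] at hscale
  rw [← hscale, setIntegral_congr_fun measurableSet_Ioo fun x hx =>
    pow_mul_weight_comp_mul_left hs k hx, integral_const_mul,
    integral_pow_mul_tiltedBetaWeight ha hb, rpow_add_one hs.ne']
  ring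

theorem eval_alternant_val_sq {n : ℕ} (z : Fin n → ℝ) :
    eval z (alternant ℝ Fin.val ^ 2) = vdm z ^ 2 := by
  have hvdm : alternant ℝ Fin.val =
      ∏ i : Fin n, ∏ j ∈ Finset.Ioi i, (X j - X i : MvPolynomial (Fin n) ℝ) :=
    Matrix.det_vandermonde X
  simp only [hvdm, vdm, map_pow, map_prod, map_sub, eval_X, ← Finset.prod_pow]
  exact Finset.prod_congr rfl fun i _ => Finset.prod_congr rfl fun j _ => by ring

theorem matInt5_eq_ensembleFunctional (n : ℕ) (ha : -1 < a) (hb : -1 < b) (hs : 0 < s) :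
    matInt5 n a b s =
      ensembleFunctional n
        (fun k => s ^ (a + b + 1) * beta (a + 1) (b + 1) * s ^ k * tiltedBetaMoment a b s k) 1 := by
  have hpi := integral_eval_mul_prod (integrableOn_pow_mul_weight ha hb hs)
    (alternant ℝ (Fin.val : Fin n → ℕ) ^ 2)
  simp only [eval_alternant_val_sq, integral_pow_mul_weight ha hb hs] at hpi
  rw [matInt5, volume_pi, Measure.restrict_pi_pi, hpi, ensembleFunctional_apply, mul_one]

theorem matInt5_eq_rpow_mul (n : ℕ) (ha : -1 < a) (hb : -1 < b) (hs : 0 < s) :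
    matInt5 n a b s = beta (a + 1) (b + 1) ^ n * s ^ (n ^ 2 + n * (a + b) : ℝ) *
      ensembleFunctional n (tiltedBetaMoment a b s) 1 := by
  have hpow : (s ^ (a + b + 1)) ^ n * s ^ (n * (n - 1)) = s ^ (n ^ 2 + n * (a + b) : ℝ) := by
    rw [← rpow_natCast, ← rpow_natCast, ← rpow_mul hs.le, ← rpow_add hs]
    cases n <;> push_cast <;> ring_nf
  rw [matInt5_eq_ensembleFunctional n ha hb hs, ensembleFunctional_mul_pow_mul_one, ← hpow]
  ring

end MatrixIntegral

section Differentiation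

open MvPolynomial

variable {μ : ℝ → ℕ → ℝ} {s : ℝ}

theorem hasDerivAt_momentFunctional {ι : Type*} [Fintype ι]
    (hμ : ∀ k, HasDerivAt (fun t => μ t k) (-μ s (k + 1)) s) (f : MvPolynomial ι ℝ) :
    HasDerivAt (fun t => momentFunctional ι (μ t) f)
      (-momentFunctional ι (μ s) (psum ι ℝ 1 * f)) s := by
  classical
  induction f using MvPolynomial.induction_on' with
  | add p q hp hq =>
    simp only [mul_add, map_add, neg_add]
    exact hp.fun_add hq
  | monomial m c =>
    simp only [momentFunctional_monomial]
    refine ((HasDerivAt.fun_finsetProd (u := Finset.univ)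
      fun i _ => hμ (m i)).const_mul c).congr_deriv ?_
    rw [psum, Finset.sum_mul, map_sum, ← Finset.sum_neg_distrib, Finset.mul_sum]
    refine Finset.sum_congr rfl fun i _ => ?_
    rw [momentFunctional_X_pow_mul_monomial, smul_eq_mul]
    ring

theorem hasDerivAt_ensembleFunctional (n : ℕ)
    (hμ : ∀ k, HasDerivAt (fun t => μ t k) (-μ s (k + 1)) s) (f : MvPolynomial (Fin n) ℝ) :
    HasDerivAt (fun t => ensembleFunctional n (μ t) f)
      (-ensembleFunctional n (μ s) (psum (Fin n) ℝ 1 * f)) s := by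
  simp only [ensembleFunctional_apply]
  exact (hasDerivAt_momentFunctional hμ _).congr_deriv (by rw [mul_left_comm])

theorem hasDerivAt_traceMoment {n : ℕ} (hμ : ∀ k, HasDerivAt (fun t => μ t k) (-μ s (k + 1)) s)
    (hne : ensembleFunctional n (μ s) 1 ≠ 0) (j : ℕ) :
    HasDerivAt (fun t => traceMoment n (μ t) j)
      (traceMoment n (μ s) 1 * traceMoment n (μ s) j - traceMoment n (μ s) (j + 1)) s := by
  simp only [traceMoment, ensembleMean_apply]
  refine (((hasDerivAt_ensembleFunctional n hμ 1).fun_inv hne).fun_mul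
    (hasDerivAt_ensembleFunctional n hμ (psum (Fin n) ℝ 1 ^ j))).congr_deriv ?_
  rw [← pow_succ', mul_one, pow_one]
  field_simp
  ring

variable {m : ℝ → ℕ → ℝ}

theorem hasDerivAt_secondCumulant
    (hm : ∀ j, HasDerivAt (fun t => m t j) (m s 1 * m s j - m s (j + 1)) s) :
    HasDerivAt (fun t => secondCumulant (m t)) (-thirdCumulant (m s)) s := by
  simp only [secondCumulant, thirdCumulant]
  refine ((hm 2).fun_sub ((hm 1).fun_pow 2)).congr_deriv ?_
  push_cast
  ring

theorem hasDerivAt_thirdCumulant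
    (hm : ∀ j, HasDerivAt (fun t => m t j) (m s 1 * m s j - m s (j + 1)) s) :
    HasDerivAt (fun t => thirdCumulant (m t)) (-fourthCumulant (m s)) s := by
  simp only [thirdCumulant, fourthCumulant]
  refine (((hm 3).fun_sub (((hm 1).const_mul 3).fun_mul (hm 2))).fun_add
    (((hm 1).fun_pow 3).const_mul 2)).congr_deriv ?_
  push_cast
  ring

end Differentiation

section Klog

variable {a b : ℝ} (n : ℕ)

theorem hasDerivAt_traceMoment_tiltedBetaMoment (ha : -1 < a) (hb : -1 < b) (s : ℝ) (j : ℕ) :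
    HasDerivAt (fun t => traceMoment n (tiltedBetaMoment a b t) j)
      (traceMoment n (tiltedBetaMoment a b s) 1 * traceMoment n (tiltedBetaMoment a b s) j -
        traceMoment n (tiltedBetaMoment a b s) (j + 1)) s :=
  hasDerivAt_traceMoment (hasDerivAt_tiltedBetaMoment ha hb s)
    (ensembleFunctional_tiltedBetaMoment_one_ne_zero ha hb n s) j

theorem hasDerivAt_log_matInt5 (ha : -1 < a) (hb : -1 < b) {s : ℝ} (hs : 0 < s) :
    HasDerivAt (fun t => Real.log (matInt5 n a b t))
      ((n ^ 2 + n * (a + b)) / s - traceMoment n (tiltedBetaMoment a b s) 1) s := by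
  have hE := ensembleFunctional_tiltedBetaMoment_one_ne_zero ha hb n s
  have hβ := (ProbabilityTheory.beta_pos (neg_lt_iff_pos_add.1 ha) (neg_lt_iff_pos_add.1 hb)).ne'
  have hlog : (fun t => Real.log (matInt5 n a b t)) =ᶠ[𝓝 s] fun t =>
      Real.log (ProbabilityTheory.beta (a + 1) (b + 1) ^ n) + (n ^ 2 + n * (a + b)) * Real.log t +
        Real.log (ensembleFunctional n (tiltedBetaMoment a b t) 1) := by
    filter_upwards [lt_mem_nhds hs] with t ht
    have hEt := ensembleFunctional_tiltedBetaMoment_one_ne_zero ha hb n t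
    rw [matInt5_eq_rpow_mul n ha hb ht, Real.log_mul (by positivity) hEt,
      Real.log_mul (by positivity) (by positivity), Real.log_rpow ht]
  refine HasDerivAt.congr_of_eventuallyEq ?_ hlog
  refine ((((Real.hasDerivAt_log hs.ne').const_mul _).const_add _).fun_add
    ((hasDerivAt_ensembleFunctional n (hasDerivAt_tiltedBetaMoment ha hb s) 1).log hE)).congr_deriv
    ?_
  rw [traceMoment, ensembleMean_apply, pow_one, mul_one]
  ring

theorem eqOn_klog5 (ha : -1 < a) (hb : -1 < b) :
    Set.EqOn (klog5 n a b)
      (fun t => n ^ 2 + n * (a + b) - t * traceMoment n (tiltedBetaMoment a b t) 1)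
      (Set.Ioi 0) := by
  intro s (hs : 0 < s)
  rw [klog5, (hasDerivAt_log_matInt5 n ha hb hs).deriv]
  field_simp

theorem eqOn_deriv_klog5 (ha : -1 < a) (hb : -1 < b) :
    Set.EqOn (deriv (klog5 n a b))
      (fun t => -traceMoment n (tiltedBetaMoment a b t) 1 +
        t * secondCumulant (traceMoment n (tiltedBetaMoment a b t)))
      (Set.Ioi 0) := by
  refine ((eqOn_klog5 n ha hb).deriv isOpen_Ioi).trans fun s _ => ?_
  have hm₁ := hasDerivAt_traceMoment_tiltedBetaMoment n ha hb s 1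
  rw [(((hasDerivAt_id' s).fun_mul hm₁).const_sub _).deriv, secondCumulant]
  ring

theorem eqOn_iteratedDeriv_two_klog5 (ha : -1 < a) (hb : -1 < b) :
    Set.EqOn (iteratedDeriv 2 (klog5 n a b))
      (fun t => 2 * secondCumulant (traceMoment n (tiltedBetaMoment a b t)) -
        t * thirdCumulant (traceMoment n (tiltedBetaMoment a b t)))
      (Set.Ioi 0) := by
  rw [iteratedDeriv_succ, iteratedDeriv_one]
  refine ((eqOn_deriv_klog5 n ha hb).deriv isOpen_Ioi).trans fun s _ => ?_
  have hm := hasDerivAt_traceMoment_tiltedBetaMoment n ha hb s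
  have hκ₂ := hasDerivAt_secondCumulant hm
  rw [((hm 1).fun_neg.fun_add ((hasDerivAt_id' s).fun_mul hκ₂)).deriv, secondCumulant]
  ring

theorem eqOn_iteratedDeriv_three_klog5 (ha : -1 < a) (hb : -1 < b) :
    Set.EqOn (iteratedDeriv 3 (klog5 n a b))
      (fun t => -3 * thirdCumulant (traceMoment n (tiltedBetaMoment a b t)) +
        t * fourthCumulant (traceMoment n (tiltedBetaMoment a b t)))
      (Set.Ioi 0) := by
  rw [iteratedDeriv_succ]
  refine ((eqOn_iteratedDeriv_two_klog5 n ha hb).deriv isOpen_Ioi).trans fun s _ => ?_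
  have hm := hasDerivAt_traceMoment_tiltedBetaMoment n ha hb s
  have hκ₂ := hasDerivAt_secondCumulant hm
  have hκ₃ := hasDerivAt_thirdCumulant hm
  rw [((hκ₂.const_mul 2).fun_sub ((hasDerivAt_id' s).fun_mul hκ₃)).deriv]
  ring

end Klog

/-- `k(s)` satisfies the Painlevé V type equation
`k‴ + k″/s + (6/s)k′² − (4/s²)kk′ − (s² − 2s(2n+a−b) + (a+b)²)k′/s²
  + (s − 2n − a + b)k/s² − (bn/s²)(s + a + b) = 0` for `s > 0`. -/
theorem statement6 (n : ℕ) (hn : 1 ≤ n) (a b : ℝ) (ha : -1 < a) (hb : -1 < b) :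
    ∀ s : ℝ, 0 < s →
      iteratedDeriv 3 (klog5 n a b) s + iteratedDeriv 2 (klog5 n a b) s / s +
        (6 / s) * (deriv (klog5 n a b) s) ^ 2 -
        (4 / s ^ 2) * klog5 n a b s * deriv (klog5 n a b) s -
        (s ^ 2 - 2 * s * (2 * n + a - b) + (a + b) ^ 2) *
          deriv (klog5 n a b) s / s ^ 2 +
        (s - 2 * n - a + b) * klog5 n a b s / s ^ 2 -
        (b * n / s ^ 2) * (s + a + b) = 0 := by
  intro s hs
  rw [eqOn_iteratedDeriv_three_klog5 n ha hb hs, eqOn_iteratedDeriv_two_klog5 n ha hb hs,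
    eqOn_deriv_klog5 n ha hb hs, eqOn_klog5 n ha hb hs]
  exact traceMoment_painleve hs.ne' (pearsonRecurrence_tiltedBetaMoment ha hb s)
    (ensembleFunctional_tiltedBetaMoment_one_ne_zero ha hb n s)

end
end
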